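/- arXiv:1509.08318 — 3 statements merged into one kernel-verified Lean document; each statement's English description precedes it below -/
import Mathlib

section
/- There exists a partition of unity f₀, f_{1/2}, f₁ of C([0,1]) (continuous functions [0,1] → [0,1] with f₀ + f_{1/2} + f₁ = 1) with f_{1/2}(t) = 0 for every t outside (1/3, 2/3), such that the following holds. Let A and E be unital C*-algebras, θ : C([0,1],ℂ) → E a unital *-homomorphism, ν₀, ν₁ : C₀((0,1),A) → E *-homomorphisms compatible with θ, and v ∈ E a unitary. Then there exists a completely positive map ρ : C₀((0,1),A) → M₂(E) such that: (i) for every x ∈ C₀((0,1),A) with x(t) = 0 for all t ∉ (0, 1/3), ρ(x) is the matrix with ν₀(x) in the (1,1) entry and 0 elsewhere; (ii) for every x with x(t) = 0 for all t ∉ (2/3, 1), ρ(x) is the matrix with ν₁(x) in the (1,1) entry and 0 elsewhere; (iii) for every tracial state τ on E with τ∘ν₀ = τ∘ν₁, one has (τ ⊗ Tr₂)(ρ(x)) = τ(ν₀(x)) for all x ∈ C₀((0,1),A); (iv) for all x ∈ C₀((0,1),A) and h ∈ C([0,1],ℂ), ‖ρ(h·x) − θ^{⊕2}(h)ρ(x)‖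 ≤ (‖[θ(f_{1/2}), v]‖·‖h‖ + ‖[θ(h·f_{1/2}), v]‖)·‖x‖; (v) for all x, y ∈ C₀((0,1),A), ‖ρ(xy) − ρ(x)ρ(y)‖ ≤ (7‖[v, θ(f_{1/2})]‖ + 2‖[v, θ(f₀·f_{1/2})]‖ + 5‖[v, θ(f_{1/2}·f₁)]‖)·‖x‖·‖y‖ + (‖ν₁((f_{1/2}·f₁)·x)v − vν₀((f_{1/2}·f₁)·x)‖ + ‖ν₁(f_{1/2}·x)v − vν₀(f_{1/2}·x)‖)·‖y‖. -/
open scoped ComplexOrder unitInterval ENNReal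

set_option synthInstance.maxHeartbeats 1000000
set_option maxHeartbeats 1000000

set_option linter.all false
noncomputable section

/-- The suspension `C₀((0,1),A)`, realised as the non-unital star subalgebra of `C([0,1],A)`
consisting of the functions vanishing at both endpoints. -/
def susp (A : Type) [CStarAlgebra A] : NonUnitalStarSubalgebra ℂ C(I, A) where
  carrier := {x | x 0 = 0 ∧ x 1 = 0}
  add_mem' hx hy := by
    constructor <;> simp [ContinuousMap.add_apply, hx.1, hx.2, hy.1, hy.2]
  mul_mem' hx hy := by
    constructor <;> simp [ContinuousMap.mul_apply, hx.1, hx.2, hy.1, hy.2]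
  smul_mem' c x hx := by
    constructor <;> simp [ContinuousMap.smul_apply, hx.1, hx.2]
  zero_mem' := by constructor <;> simp
  star_mem' hx := by
    constructor <;> simp [ContinuousMap.star_apply, hx.1, hx.2]

/-- The pointwise product `h·x` of a scalar-valued continuous function on `[0,1]` with an element
of the suspension, which again lies in the suspension. -/
def hsmul {A : Type} [CStarAlgebra A] (h : C(I, ℂ)) (x : susp A) : susp A :=
  ⟨h • (x : C(I, A)), by
    have h0 : (x : C(I, A)) 0 = 0 ∧ (x : C(I, A)) 1 = 0 := x.2
    constructor <;> simp [ContinuousMap.smul_apply', h0.1, h0.2]⟩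

/-- A real-valued continuous function on `[0,1]`, regarded as a complex-valued one. -/
def ofRealCM (f : C(I, ℝ)) : C(I, ℂ) :=
  ⟨fun t => (f t : ℂ), Complex.continuous_ofReal.comp f.continuous⟩

/-- A *-homomorphism `ν : C₀((0,1),A) → E` is compatible with a unital *-homomorphism
`θ : C([0,1]) → E` if `ν(h·x) = θ(h)ν(x) = ν(x)θ(h)` for all `h` and `x`. -/
def Compatible {A E : Type} [CStarAlgebra A] [CStarAlgebra E]
    (θ : C(I, ℂ) →⋆ₐ[ℂ] E) (ν : susp A →⋆ₙₐ[ℂ] E) : Prop :=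
  ∀ (h : C(I, ℂ)) (x : susp A), ν (hsmul h x) = θ h * ν x ∧ ν (hsmul h x) = ν x * θ h

/-- Tracial states on a unital C*-algebra. -/
def IsTracialState {B : Type} [CStarAlgebra B] (τ : B →L[ℂ] ℂ) : Prop :=
  τ 1 = 1 ∧ (∀ b : B, (∃ y, b = star y * y) → 0 ≤ τ b) ∧ ∀ a b : B, τ (a * b) = τ (b * a)

/-- The C*-norm on a complex star algebra (such as a matrix algebra over a C*-algebra),
defined via the spectral radius; this recovers the unique C*-norm when one exists. -/
def cstarNorm {B : Type} [Ring B] [StarRing B] [Algebra ℂ B] (a : B) : ℝ :=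
  Real.sqrt (spectralRadius ℂ (star a * a)).toReal

/-- Complete positivity of a linear map between complex star algebras: positive matrices
(i.e. those of the form `y* y`) are sent to positive matrices, at every matrix level. -/
def IsCompletelyPositive {B C : Type} [NonUnitalRing B] [StarRing B] [Module ℂ B]
    [NonUnitalRing C] [StarRing C] [Module ℂ C] (φ : B →ₗ[ℂ] C) : Prop :=
  ∀ (n : ℕ) (M : Matrix (Fin n) (Fin n) B),
    (∃ y : Matrix (Fin n) (Fin n) B, M = star y * y) →
    ∃ z : Matrix (Fin n) (Fin n) C, M.map (fun b => φ b) = star z * z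

section kit
variable {E : Type} [CStarAlgebra E]

theorem cn_eq [PartialOrder E] [StarOrderedRing E] (a : Matrix (Fin 2) (Fin 2) E) :
    cstarNorm a = ‖CStarMatrix.ofMatrix a‖ := by
  have h1 : spectralRadius ℂ (star a * a) =
      spectralRadius ℂ (star (CStarMatrix.ofMatrix a) * CStarMatrix.ofMatrix a) := rfl
  have h2 : IsSelfAdjoint (star (CStarMatrix.ofMatrix a) * CStarMatrix.ofMatrix a) :=
    IsSelfAdjoint.star_mul_self _
  unfold cstarNorm
  rw [h1, h2.spectralRadius_eq_nnnorm]
  simp only [ENNReal.coe_toReal, coe_nnnorm]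
  rw [CStarRing.norm_star_mul_self, Real.sqrt_mul_self (norm_nonneg _)]

theorem cn_add (a b : Matrix (Fin 2) (Fin 2) E) :
    cstarNorm (a + b) ≤ cstarNorm a + cstarNorm b := by
  let _ : PartialOrder E := CStarAlgebra.spectralOrder E
  have : StarOrderedRing E := CStarAlgebra.spectralOrderedRing E
  rw [cn_eq, cn_eq, cn_eq]
  exact norm_add_le (CStarMatrix.ofMatrix a) (CStarMatrix.ofMatrix b)

theorem cn_mul (a b : Matrix (Fin 2) (Fin 2) E) :
    cstarNorm (a * b) ≤ cstarNorm a * cstarNorm b := by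
  let _ : PartialOrder E := CStarAlgebra.spectralOrder E
  have : StarOrderedRing E := CStarAlgebra.spectralOrderedRing E
  rw [cn_eq, cn_eq, cn_eq]
  exact norm_mul_le (CStarMatrix.ofMatrix a) (CStarMatrix.ofMatrix b)

theorem cn_nonneg (a : Matrix (Fin 2) (Fin 2) E) : 0 ≤ cstarNorm a := Real.sqrt_nonneg _

theorem cn_star (a : Matrix (Fin 2) (Fin 2) E) : cstarNorm (star a) = cstarNorm a := by
  let _ : PartialOrder E := CStarAlgebra.spectralOrder E
  have : StarOrderedRing E := CStarAlgebra.spectralOrderedRing E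
  rw [cn_eq, cn_eq]
  exact norm_star (CStarMatrix.ofMatrix a)

theorem cn_sq (a : Matrix (Fin 2) (Fin 2) E) : cstarNorm (a * star a) = cstarNorm a ^ 2 := by
  let _ : PartialOrder E := CStarAlgebra.spectralOrder E
  have : StarOrderedRing E := CStarAlgebra.spectralOrderedRing E
  rw [cn_eq, cn_eq, sq]
  exact CStarRing.norm_self_mul_star (x := CStarMatrix.ofMatrix a)

theorem star2 (a b c d : E) : star !![a, b; c, d] = !![star a, star c; star b, star d] := by
  ext i j; fin_cases i <;> fin_cases j <;> simp [Matrix.star_apply]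

def diagHom (E : Type) [CStarAlgebra E] : E × E →⋆ₙₐ[ℂ] CStarMatrix (Fin 2) (Fin 2) E where
  toFun z := CStarMatrix.ofMatrix !![z.1, 0; 0, z.2]
  map_smul' c z := by
    ext i j; fin_cases i <;> fin_cases j <;> simp
  map_zero' := by ext i j; fin_cases i <;> fin_cases j <;> simp
  map_add' z w := by ext i j; fin_cases i <;> fin_cases j <;> simp
  map_mul' z w := by
    ext i j; fin_cases i <;> fin_cases j <;> simp [CStarMatrix.mul_apply]
  map_star' z := by
    ext i j; fin_cases i <;> fin_cases j <;> simp [CStarMatrix.star_apply]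

theorem cn_diag (a b : E) : cstarNorm !![a, 0; 0, b] ≤ max ‖a‖ ‖b‖ := by
  let _ : PartialOrder E := CStarAlgebra.spectralOrder E
  have : StarOrderedRing E := CStarAlgebra.spectralOrderedRing E
  rw [cn_eq]
  exact NonUnitalStarAlgHom.norm_apply_le (diagHom E) (a, b)

theorem cn_unitary (U : Matrix (Fin 2) (Fin 2) E) (h : U * star U = 1) : cstarNorm U ≤ 1 := by
  have h1 : cstarNorm (1 : Matrix (Fin 2) (Fin 2) E) ≤ 1 := by
    have := cn_diag (1 : E) 1
    rw [← Matrix.one_fin_two] at this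
    refine this.trans ?_
    rcases subsingleton_or_nontrivial E with hE | hE
    · simp [Subsingleton.elim (1 : E) 0]
    · simp
  have := cn_sq U
  rw [h] at this
  nlinarith [cn_nonneg U]

theorem cn_conj (U Z : Matrix (Fin 2) (Fin 2) E) (h : U * star U = 1) :
    cstarNorm (U * Z * star U) ≤ cstarNorm Z := by
  have h1 := cn_unitary U h
  have h2 := cn_mul (U * Z) (star U)
  have h3 := cn_mul U Z
  rw [cn_star] at h2
  have h4 := cn_nonneg Z
  have h5 := cn_nonneg U
  calc _ ≤ _ := h2
    _ ≤ (cstarNorm U * cstarNorm Z) * cstarNorm U := by gcongr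
    _ ≤ (1 * cstarNorm Z) * 1 := by gcongr
    _ = _ := by ring

theorem cn_corner (p q r : E) : cstarNorm !![p, q; r, 0] ≤ ‖p‖ + max ‖q‖ ‖r‖ := by
  have e : !![p, q; r, 0] = !![p, 0; 0, 0] + !![q, 0; 0, r] * !![0, 1; 1, 0] := by
    ext i j; fin_cases i <;> fin_cases j <;> simp [Matrix.mul_apply]
  have h0 : cstarNorm (!![0, 1; 1, 0] : Matrix (Fin 2) (Fin 2) E) ≤ 1 := by
    apply cn_unitary
    ext i j; fin_cases i <;> fin_cases j <;> simp [Matrix.mul_apply, Matrix.star_apply]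
  have h1 := cn_diag p 0
  rw [norm_zero, max_eq_left (norm_nonneg p)] at h1
  have h2 := cn_diag q r
  rw [e]
  refine (cn_add _ _).trans (add_le_add h1 ((cn_mul _ _).trans ?_))
  calc _ ≤ cstarNorm !![q, 0; 0, r] * 1 := by
        gcongr
        exact cn_nonneg _
    _ ≤ _ := by simpa using h2

/-- row estimate -/
theorem cn_row (w α β : E) (h : ‖α * star α + β * star β‖ ≤ 1) :
    cstarNorm !![w * α, w * β; 0, 0] ≤ ‖w‖ := by
  have e : !![w * α, w * β; 0, 0] * star !![w * α, w * β; 0, 0] =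
      !![w * (α * star α + β * star β) * star w, 0; 0, 0] := by
    ext i j; fin_cases i <;> fin_cases j <;>
      simp [Matrix.mul_apply, Matrix.star_apply, mul_add, add_mul, mul_assoc]
  have h1 := cn_sq !![w * α, w * β; 0, 0]
  have h2 := cn_diag (w * (α * star α + β * star β) * star w) 0
  rw [norm_zero, max_eq_left (norm_nonneg _)] at h2
  rw [e] at h1
  have h3 : ‖w * (α * star α + β * star β) * star w‖ ≤ ‖w‖ ^ 2 := by
    calc _ ≤ ‖w‖ * ‖α * star α + β * star β‖ * ‖star w‖ := norm_mul₃_le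
      _ ≤ ‖w‖ * 1 * ‖w‖ := by rw [norm_star]; gcongr
      _ = _ := by ring
  exact (le_abs_self _).trans (abs_le_of_sq_le_sq (by linarith) (norm_nonneg _))
end kit

section alg
variable {E : Type} [CStarAlgebra E]

theorem nm {a b : E} {α β : ℝ} (ha : ‖a‖ ≤ α) (hb : ‖b‖ ≤ β) : ‖a * b‖ ≤ α * β :=
  (norm_mul_le a b).trans (mul_le_mul ha hb (norm_nonneg _) ((norm_nonneg a).trans ha))

theorem na {a b : E} {α β : ℝ} (ha : ‖a‖ ≤ α) (hb : ‖b‖ ≤ β) : ‖a + b‖ ≤ α + β :=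
  (norm_add_le a b).trans (add_le_add ha hb)

theorem ns {a b : E} {α β : ℝ} (ha : ‖a‖ ≤ α) (hb : ‖b‖ ≤ β) : ‖a - b‖ ≤ α + β :=
  (norm_sub_le a b).trans (add_le_add ha hb)

theorem comm_star {v u f : E} (hvu : v * u = 1) (huv : u * v = 1) (hv : ‖v‖ ≤ 1) (hu : ‖u‖ ≤ 1) :
    ‖f * u - u * f‖ ≤ ‖v * f - f * v‖ := by
  have e : f * u - u * f = u * (v * f - f * v) * u := by
    have : u * (v * f - f * v) * u = (u * v) * f * u - u * f * (v * u) := by noncomm_ring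
    rw [this, hvu, huv]; noncomm_ring
  rw [e]
  have := nm (nm hu (le_refl ‖v * f - f * v‖)) hu
  linarith

theorem entry00 {v u f g m X0 X1 Y0 Y1 : E} {Nx Ny : ℝ}
    (hvu : v * u = 1) (huv : u * v = 1) (hv : ‖v‖ ≤ 1) (hu : ‖u‖ ≤ 1)
    (hf : ‖f‖ ≤ 1) (hg : ‖g‖ ≤ 1) (hm : ‖m‖ ≤ 1) (hgf' : ‖g * f‖ ≤ 1 / 2) (h1 : ‖1 + f‖ ≤ 2)
    (hfg : f * g = g * f) (hgf : g * f = (1 + f) * m) 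
    (hf0 : f * X0 = X0 * f) (hg0 : g * X0 = X0 * g) (hf1 : f * X1 = X1 * f)
    (hg1 : g * X1 = X1 * g)
    (hX0 : ‖X0‖ ≤ Nx) (hX1 : ‖X1‖ ≤ Nx) (hY0 : ‖Y0‖ ≤ Ny) (hY1 : ‖Y1‖ ≤ Ny) :
    ‖(v * f * f * g * X0 - g * X1 * v * f * f) * Y0 * u +
      (f * f * g * X1 - v * f * f * X0 * u * g) * Y1‖ ≤
      (4 * ‖v * f - f * v‖ + 2 * ‖v * m - m * v‖) * Nx * Ny +
        ‖f * X1 * v - v * (f * X0)‖ * Ny := by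
  have hNx : 0 ≤ Nx := (norm_nonneg _).trans hX0
  have hNy : 0 ≤ Ny := (norm_nonneg _).trans hY0
  have e1 : v * f * f * g * X0 - g * X1 * v * f * f =
      (1 + f) * (v * m - m * v) * f * X0 + (v * f - f * v) * m * f * X0
        - g * f * (f * X1 * v - v * (f * X0))
        - g * X1 * ((v * f - f * v) * f + f * (v * f - f * v)) := by
    linear_combination (norm := noncomm_ring) (-(hgf * v * f * X0)) + g * f * hf1 * v
      + g * hf1 * f * v + v * f * hfg * X0 + v * hfg * f * X0 + v * hgf * f * X0
  have e2 : f * f * g * X1 - v * f * f * X0 * u * g =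
      (f * X1 * v - v * (f * X0)) * u * (g * f) - v * f * X0 * (f * u - u * f) * g := by
    linear_combination (norm := noncomm_ring) (- v * f * hf0 * u * g) - v * f * X0 * u * hfg
      - f * X1 * hvu * (g * f) + f * hfg * X1  + f * g * hf1 + f * hg1 * f
  have c1 := comm_star (f := f) hvu huv hv hu
  have r := le_refl ‖v * f - f * v‖
  have r1 := le_refl ‖v * m - m * v‖
  have r2 := le_refl ‖f * X1 * v - v * (f * X0)‖
  rw [e1, e2]
  have b1 := nm (nm (ns (ns (na (nm (nm (nm h1 r1) hf) hX0) (nm (nm (nm r hm) hf) hX0))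
    (nm hgf' r2)) (nm (nm hg hX1) (na (nm r hf) (nm hf r)))) hY0) hu
  have b2 := nm (ns (nm (nm r2 hu) hgf') (nm (nm (nm (nm hv hf) hX0) c1) hg)) hY1
  refine (na b1 b2).trans (le_of_eq ?_)
  ring

theorem entry10 {v u f g m a X0 Y1 : E} {Nx Ny : ℝ}
    (hvu : v * u = 1) (huv : u * v = 1) (hv : ‖v‖ ≤ 1) (hu : ‖u‖ ≤ 1)
    (hf : ‖f‖ ≤ 1) (hg : ‖g‖ ≤ 1) (h1 : ‖1 + f‖ ≤ 2) (ha : ‖a‖ ≤ 1)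
    (hfg : f * g = m * (1 + f)) (ham : a * m = 0)
    (hf0 : f * X0 = X0 * f) (ha0 : a * X0 = X0 * a) 
    (hX0 : ‖X0‖ ≤ Nx) (hY1 : ‖Y1‖ ≤ Ny) :
    ‖a * f * X0 * u * g * Y1‖ ≤ (‖v * f - f * v‖ + 2 * ‖v * m - m * v‖) * Nx * Ny := by
  have hNx : 0 ≤ Nx := (norm_nonneg _).trans hX0
  have hNy : 0 ≤ Ny := (norm_nonneg _).trans hY1
  have e : a * f * X0 * u * g * Y1 =
      X0 * (a * (f * u - u * f) * g - a * (m * u - u * m) * (1 + f)) * Y1 := by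
    linear_combination (norm := noncomm_ring) a * hf0 * u * g * Y1 + ha0 * f * u * g * Y1
      + X0 * a * u * hfg * Y1 + X0 * ham * u * (1 + f) * Y1
  have c1 := comm_star (f := f) hvu huv hv hu
  have c2 := comm_star (f := m) hvu huv hv hu
  rw [e]
  have b := nm (nm hX0 (ns (nm (nm ha c1) hg) (nm (nm ha c2) h1))) hY1
  refine b.trans (le_of_eq ?_)
  ring

theorem entry01 {v f g m a X1 Y0 : E} {Nx Ny : ℝ}
    (hg : ‖g‖ ≤ 1) (h1 : ‖1 + f‖ ≤ 2) (ha : ‖a‖ ≤ 1)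
    (hgf : g * f = (1 + f) * m) (hma : m * a = 0)
    (hg1 : g * X1 = X1 * g) 
    (hX1 : ‖X1‖ ≤ Nx) (hY0 : ‖Y0‖ ≤ Ny) :
    ‖g * X1 * v * f * a * Y0‖ ≤ (‖v * f - f * v‖ + 2 * ‖v * m - m * v‖) * Nx * Ny := by
  have hNx : 0 ≤ Nx := (norm_nonneg _).trans hX1
  have hNy : 0 ≤ Ny := (norm_nonneg _).trans hY0
  have e : g * X1 * v * f * a * Y0 =
      X1 * (g * (v * f - f * v) * a - (1 + f) * (v * m - m * v) * a) * Y0 := by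
    linear_combination (norm := noncomm_ring) hg1 * v * f * a * Y0 + X1 * hgf * v * a * Y0
      + X1 * (1 + f) * v * hma * Y0
  have r := le_refl ‖v * f - f * v‖
  have r1 := le_refl ‖v * m - m * v‖
  rw [e]
  have b := nm (nm hX1 (ns (nm (nm hg r) ha) (nm (nm h1 r1) ha))) hY0
  refine b.trans (le_of_eq ?_)
  ring
end alg

section mat
variable {E : Type} [CStarAlgebra E]

theorem asl {a b : E} (h : a * b = b * a) (z : E) : a * (b * z) = b * (a * z) := by
  rw [← mul_assoc, h, mul_assoc]

theorem asl' {a b c : E} (h : a * b = c) (z : E) : a * (b * z) = c * z := by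
  rw [← mul_assoc, h]

/-- the relations between the elements used in the construction -/
structure PRel (v u f a d p q m : E) : Prop where
  vu : v * u = 1
  uv : u * v = 1
  sv : star v = u
  su : star u = v
  nv : ‖v‖ ≤ 1
  nu : ‖u‖ ≤ 1
  sf : star f = f
  sa : star a = a
  sd : star d = d
  sp : star p = p
  sq : star q = q
  fa : a * f = f * a
  fd : d * f = f * d
  pq : q * p = p * q
  ad : a * d = 0
  da : d * a = 0
  one : f * f + a * a + d * d = 1
  rot : p * p + q * q = 1
  nf : ‖f‖ ≤ 1
  ng : ‖d * d‖ ≤ 1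
  nm : ‖m‖ ≤ 1
  na : ‖a‖ ≤ 1
  nfa : ‖f * f + a * a‖ ≤ 1
  ngf : ‖d * d * f‖ ≤ 1 / 2
  n1 : ‖1 + f‖ ≤ 2
  gf : d * d * f = (1 + f) * m
  gf' : d * d * f = m * (1 + f)
  am : a * m = 0
  ma : m * a = 0

structure Cm (f a d X : E) : Prop where
  f : X * f = f * X
  a : X * a = a * X
  d : X * d = d * X

def SM (v f a d : E) : Matrix (Fin 2) (Fin 2) E := !![v * f, d; a, 0]
def UM (p q : E) : Matrix (Fin 2) (Fin 2) E := !![p, q; -q, p]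
def NM (X0 X1 : E) : Matrix (Fin 2) (Fin 2) E := !![X0, 0; 0, X1]

variable {v u f a d p q m X0 X1 Y0 Y1 : E}

theorem UM_unit (R : PRel v u f a d p q m) : UM p q * star (UM p q) = 1 := by
  rw [UM, star2, Matrix.mul_fin_two, Matrix.one_fin_two]
  have h2 := R.rot
  have h3 : q * q + p * p = 1 := by rw [add_comm]; exact h2
  simp [R.sp, R.sq, R.pq, h2, h3]

theorem UM_unit' (R : PRel v u f a d p q m) : star (UM p q) * UM p q = 1 := by
  rw [UM, star2, Matrix.mul_fin_two, Matrix.one_fin_two]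
  have h2 := R.rot
  have h3 : q * q + p * p = 1 := by rw [add_comm]; exact h2
  simp [R.sp, R.sq, R.pq, h2, h3]

theorem SNS (R : PRel v u f a d p q m) (C0 : Cm f a d X0) (C1 : Cm f a d X1) :
    SM v f a d * NM X0 X1 * star (SM v f a d) =
      !![v * f * f * X0 * u + d * d * X1, v * f * a * X0; f * a * X0 * u, a * a * X0] := by
  rw [SM, NM, star2, Matrix.mul_fin_two, Matrix.mul_fin_two]
  simp [R.sf, R.sv, R.sd, R.sa, mul_assoc, C0.f, C0.a, C1.d, asl C0.f, asl C0.a, asl C1.d, asl R.fa]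

theorem mult_err (R : PRel v u f a d p q m) (C0 : Cm f a d X0) (C1 : Cm f a d X1)
    (D0 : Cm f a d Y0) (D1 : Cm f a d Y1) :
    SM v f a d * NM (X0 * Y0) (X1 * Y1) * star (SM v f a d) -
      (SM v f a d * NM X0 X1 * star (SM v f a d)) * (SM v f a d * NM Y0 Y1 * star (SM v f a d)) =
    !![(v * f * f * (d * d) * X0 - (d * d) * X1 * v * f * f) * Y0 * u +
        (f * f * (d * d) * X1 - v * f * f * X0 * u * (d * d)) * Y1,
      -((d * d) * X1 * v * f * a * Y0); -(a * f * X0 * u * (d * d) * Y1), 0] := by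
  have E0 : Cm f a d (X0 * Y0) := ⟨by rw [mul_assoc, D0.f, asl C0.f], by
    rw [mul_assoc, D0.a, asl C0.a], by rw [mul_assoc, D0.d, asl C0.d]⟩
  have E1 : Cm f a d (X1 * Y1) := ⟨by rw [mul_assoc, D1.f, asl C1.f], by
    rw [mul_assoc, D1.a, asl C1.a], by rw [mul_assoc, D1.d, asl C1.d]⟩
  rw [SNS R C0 C1, SNS R D0 D1, SNS R E0 E1, Matrix.mul_fin_two]
  have haa : a * a = 1 - f * f - d * d := by rw [← R.one]; abel
  have haa' : ∀ z, a * (a * z) = z - f * (f * z) - d * (d * z) := fun z => by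
    rw [← mul_assoc, haa]; noncomm_ring
  have dda : ∀ z, d * (a * z) = 0 := fun z => by rw [← mul_assoc, R.da, zero_mul]
  have had : ∀ z, a * (d * z) = 0 := fun z => by rw [← mul_assoc, R.ad, zero_mul]
  have hd4 : ∀ z, d * (d * (d * (d * z))) = d * (d * z) - f * (f * (d * (d * z))) := fun z => by
    have h := haa' (d * (d * z))
    rw [had, mul_zero] at h
    rw [eq_comm, sub_eq_zero] at h
    exact h.symm
  ext i j
  fin_cases i <;> fin_cases j
  · simp [mul_assoc, hd4, C0.f, C0.a, C0.d, C1.f, C1.a, C1.d, asl C0.f, asl C0.a, asl C0.d, asl C1.f, asl C1.a,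
      asl C1.d, asl R.fa, asl R.fd, R.fa, R.fd, asl' R.vu, asl' R.uv, R.uv, R.vu, dda, had, haa',
      mul_add, add_mul, mul_sub, sub_mul, R.ad, R.da]
    abel
  all_goals
    simp [mul_assoc, hd4, C0.f, C0.a, C0.d, C1.f, C1.a, C1.d, asl C0.f, asl C0.a, asl C0.d, asl C1.f, asl C1.a,
      asl C1.d, asl R.fa, asl R.fd, R.fa, R.fd, asl' R.vu, asl' R.uv, R.uv, R.vu, dda, had, haa',
      mul_add, add_mul, mul_sub, sub_mul, R.ad, R.da]
    try abel

theorem mult_bound {Nx Ny : ℝ} (R : PRel v u f a d p q m) (C0 : Cm f a d X0) (C1 : Cm f a d X1)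
    (D0 : Cm f a d Y0) (D1 : Cm f a d Y1)
    (hX0 : ‖X0‖ ≤ Nx) (hX1 : ‖X1‖ ≤ Nx) (hY0 : ‖Y0‖ ≤ Ny) (hY1 : ‖Y1‖ ≤ Ny) :
    cstarNorm (SM v f a d * NM (X0 * Y0) (X1 * Y1) * star (SM v f a d) -
      (SM v f a d * NM X0 X1 * star (SM v f a d)) * (SM v f a d * NM Y0 Y1 * star (SM v f a d))) ≤
    (5 * ‖v * f - f * v‖ + 4 * ‖v * m - m * v‖) * Nx * Ny +
        ‖f * X1 * v - v * (f * X0)‖ * Ny := by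
  rw [mult_err R C0 C1 D0 D1]
  have hg0 : d * d * X0 = X0 * (d * d) := by rw [asl C0.d, C0.d, mul_assoc]
  have hg1 : d * d * X1 = X1 * (d * d) := by rw [asl C1.d, C1.d, mul_assoc]
  have hfg : f * (d * d) = d * d * f := by rw [mul_assoc, R.fd, asl R.fd]
  have b0 := entry00 R.vu R.uv R.nv R.nu R.nf R.ng R.nm R.ngf R.n1 hfg R.gf C0.f.symm hg0
    C1.f.symm hg1 hX0 hX1 hY0 hY1
  have b1 := entry10 R.vu R.uv R.nv R.nu R.nf R.ng R.n1 R.na (hfg.trans R.gf') R.am C0.f.symm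
    C0.a.symm hX0 hY1
  have b2 := entry01 (v := v) R.ng R.n1 R.na R.gf R.ma hg1 hX1 hY0
  refine (cn_corner _ _ _).trans ?_
  rw [norm_neg, norm_neg]
  have := max_le b2 b1
  linarith

theorem compat_bound {Nx : ℝ} {h : E} (R : PRel v u f a d p q m) 
    (hf : h * f = f * h) (hd : h * d = d * h) (ha : h * a = a * h) (hp : h * p = p * h)
    (hq : h * q = q * h) (hX0 : ‖X0‖ ≤ Nx) :
    cstarNorm (UM p q * SM v f a d * NM (h * X0) (h * X1) * star (UM p q * SM v f a d) -
      Matrix.diagonal (fun _ => h) * (UM p q * SM v f a d * NM X0 X1 * star (UM p q * SM v f a d)))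
      ≤ (‖f * v - v * f‖ * ‖h‖ + ‖h * f * v - v * (h * f)‖) * Nx := by
  have hH : (Matrix.diagonal (fun _ => h) : Matrix (Fin 2) (Fin 2) E) = !![h, 0; 0, h] := by
    ext i j; fin_cases i <;> fin_cases j <;> simp
  rw [hH]
  have e1 : NM (h * X0) (h * X1) = !![h, 0; 0, h] * NM X0 X1 := by
    rw [NM, NM, Matrix.mul_fin_two]; simp
  have e2 : !![h, 0; 0, h] * UM p q = UM p q * !![h, 0; 0, h] := by
    rw [UM, Matrix.mul_fin_two, Matrix.mul_fin_two]; simp [hp, hq]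
  have e3 : UM p q * SM v f a d * NM (h * X0) (h * X1) * star (UM p q * SM v f a d) -
      !![h, 0; 0, h] * (UM p q * SM v f a d * NM X0 X1 * star (UM p q * SM v f a d)) =
      UM p q * ((SM v f a d * !![h, 0; 0, h] - !![h, 0; 0, h] * SM v f a d) * NM X0 X1
        * star (SM v f a d)) * star (UM p q) := by
    rw [e1, star_mul]
    linear_combination (norm := noncomm_ring) -(e2 * SM v f a d * NM X0 X1 * star (SM v f a d) *
      star (UM p q))
  rw [e3]
  refine (cn_conj _ _ (UM_unit R)).trans ?_
  have e4 : (SM v f a d * !![h, 0; 0, h] - !![h, 0; 0, h] * SM v f a d) * NM X0 X1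
        * star (SM v f a d) = !![((v * f * h - h * (v * f)) * X0) * (f * u),
          ((v * f * h - h * (v * f)) * X0) * a; 0, 0] := by
    rw [SM, NM, star2, Matrix.mul_fin_two, Matrix.mul_fin_two]
    ext i j
    fin_cases i <;> fin_cases j <;>
      simp [Matrix.mul_apply, R.sf, R.sv, R.sa, hd, ha]
  rw [e4]
  have hr : ‖(f * u) * star (f * u) + a * star a‖ ≤ 1 := by
    rw [star_mul, R.su, R.sf, R.sa, mul_assoc, asl' R.uv, one_mul]; exact R.nfa
  refine (cn_row _ _ _ hr).trans ?_
  have e5 : v * f * h - h * (v * f) = h * (f * v - v * f) - (h * f * v - v * (h * f)) := by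
    linear_combination (norm := noncomm_ring) -(v * hf)
  rw [e5]
  refine (nm (ns (nm (le_refl ‖h‖) (le_refl ‖f * v - v * f‖)) (le_refl _)) hX0).trans (le_of_eq ?_)
  ring
end mat

section fns

def k0 : C(I, ℝ) := ⟨fun t => max 0 (min 1 (3 - 6 * (t : ℝ))), by fun_prop⟩
def k1 : C(I, ℝ) := ⟨fun t => max 0 (min 1 (6 * (t : ℝ) - 3)), by fun_prop⟩
def kh : C(I, ℝ) := 1 - k0 - k1
def ka : C(I, ℝ) := ⟨fun t => Real.sqrt (k0 t * (1 + kh t)), by fun_prop⟩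
def kd : C(I, ℝ) := ⟨fun t => Real.sqrt (k1 t * (1 + kh t)), by fun_prop⟩
def kp : C(I, ℝ) := ⟨fun t => max 0 (min 1 (3 * (t : ℝ) - 1)), by fun_prop⟩
def kq : C(I, ℝ) := ⟨fun t => Real.sqrt (1 - kp t ^ 2), by fun_prop⟩

theorem k0_mem (t : I) : k0 t ∈ Set.Icc (0 : ℝ) 1 := by
  simp [k0]
theorem k1_mem (t : I) : k1 t ∈ Set.Icc (0 : ℝ) 1 := by
  simp [k1]
theorem kp_mem (t : I) : kp t ∈ Set.Icc (0 : ℝ) 1 := by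
  simp [kp]
theorem kh_eq (t : I) : kh t = 1 - k0 t - k1 t := rfl
theorem k01 (t : I) : k0 t = 0 ∨ k1 t = 0 := by
  rcases le_total (t : ℝ) (1 / 2) with h | h
  · right
    simp only [k1, ContinuousMap.coe_mk]
    rw [min_eq_right (by linarith), max_eq_left (by linarith)]
  · left
    simp only [k0, ContinuousMap.coe_mk]
    rw [min_eq_right (by linarith), max_eq_left (by linarith)]
theorem kh_mem (t : I) : kh t ∈ Set.Icc (0 : ℝ) 1 := by
  have h0 := k0_mem t
  have h1 := k1_mem t
  rw [kh_eq]
  rcases k01 t with h | h <;> rw [h] <;> constructor <;> linarith [h0.1, h0.2, h1.1, h1.2]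
theorem k0_left (t : I) (h : (t : ℝ) ≤ 1 / 3) : k0 t = 1 ∧ k1 t = 0 ∧ kp t = 0 := by
  refine ⟨?_, ?_, ?_⟩
  · simp only [k0, ContinuousMap.coe_mk]
    rw [min_eq_left (by linarith), max_eq_right (by linarith)]
  · simp only [k1, ContinuousMap.coe_mk]
    rw [min_eq_right (by linarith), max_eq_left (by linarith)]
  · simp only [kp, ContinuousMap.coe_mk]
    rw [min_eq_right (by linarith), max_eq_left (by linarith)]
theorem k0_right (t : I) (h : 2 / 3 ≤ (t : ℝ)) : k0 t = 0 ∧ k1 t = 1 ∧ kp t = 1 := by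
  refine ⟨?_, ?_, ?_⟩
  · simp only [k0, ContinuousMap.coe_mk]
    rw [min_eq_right (by linarith), max_eq_left (by linarith)]
  · simp only [k1, ContinuousMap.coe_mk]
    rw [min_eq_left (by linarith), max_eq_right (by linarith)]
  · simp only [kp, ContinuousMap.coe_mk]
    rw [min_eq_left (by linarith), max_eq_right (by linarith)]

theorem ka_sq (t : I) : ka t * ka t = k0 t * (1 + kh t) :=
  Real.mul_self_sqrt (mul_nonneg (k0_mem t).1 (by linarith [(kh_mem t).1]))
theorem kd_sq (t : I) : kd t * kd t = k1 t * (1 + kh t) :=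
  Real.mul_self_sqrt (mul_nonneg (k1_mem t).1 (by linarith [(kh_mem t).1]))
theorem kq_sq (t : I) : kq t * kq t = 1 - kp t ^ 2 :=
  Real.mul_self_sqrt (by nlinarith [(kp_mem t).1, (kp_mem t).2])
theorem ka_k1 (t : I) : ka t = 0 ∨ k1 t = 0 := by
  rcases k01 t with h | h
  · left; simp [ka, h]
  · right; exact h
theorem ka_kd (t : I) : ka t = 0 ∨ kd t = 0 := by
  rcases k01 t with h | h
  · left; simp [ka, h]
  · right; simp [kd, h]

variable {E : Type} [CStarAlgebra E] (θ : C(I, ℂ) →⋆ₐ[ℂ] E)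

def tr (k : C(I, ℝ)) : E := θ (ofRealCM k)

theorem tr_mul (k l : C(I, ℝ)) : tr θ (k * l) = tr θ k * tr θ l := by
  rw [tr, tr, tr, ← map_mul]; congr 1; ext t; simp [ofRealCM]
theorem tr_add (k l : C(I, ℝ)) : tr θ (k + l) = tr θ k + tr θ l := by
  rw [tr, tr, tr, ← map_add]; congr 1; ext t; simp [ofRealCM]
theorem tr_one : tr θ 1 = 1 := by
  rw [tr, ← map_one θ]; congr 1
theorem tr_zero : tr θ 0 = 0 := by
  rw [tr, ← map_zero θ]; congr 1
theorem tr_star (k : C(I, ℝ)) : star (tr θ k) = tr θ k := by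
  rw [tr, ← map_star]; congr 1; ext t; simp [ofRealCM]
theorem tr_comm (k : C(I, ℝ)) (h : C(I, ℂ)) : θ h * tr θ k = tr θ k * θ h := by
  rw [tr, ← map_mul, ← map_mul, mul_comm]
theorem tr_norm (k : C(I, ℝ)) (c : ℝ) (hc : 0 ≤ c) (h : ∀ t, |k t| ≤ c) : ‖tr θ k‖ ≤ c := by
  refine (NonUnitalStarAlgHom.norm_apply_le θ (ofRealCM k)).trans ?_
  rw [ContinuousMap.norm_le _ hc]
  intro t
  simpa [ofRealCM] using h t

theorem tr_rel (v : E) (hv : v ∈ unitary E) :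
    PRel v (star v) (tr θ kh) (tr θ ka) (tr θ kd) (tr θ kp) (tr θ kq) (tr θ (kh * k1)) := by
  have nv : ‖v‖ ≤ 1 := by
    rcases subsingleton_or_nontrivial E with hE | hE
    · simp [Subsingleton.elim v 0]
    · exact (CStarRing.norm_of_mem_unitary hv).le
  have cm : ∀ k l, tr θ k * tr θ l = tr θ l * tr θ k := fun k l => tr_comm θ l (ofRealCM k)
  constructor
  · exact Unitary.mul_star_self_of_mem hv
  · exact Unitary.star_mul_self_of_mem hv
  · rfl
  · exact star_star v
  · exact nv
  · rwa [norm_star]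
  · exact tr_star θ _
  · exact tr_star θ _
  · exact tr_star θ _
  · exact tr_star θ _
  · exact tr_star θ _
  · exact cm _ _
  · exact cm _ _
  · exact cm _ _
  · rw [← tr_mul, ← tr_zero θ]
    congr 1; ext t
    rcases ka_kd t with h | h <;> simp [h]
  · rw [← tr_mul, ← tr_zero θ]
    congr 1; ext t
    rcases ka_kd t with h | h <;> simp [h]
  · rw [← tr_mul, ← tr_mul, ← tr_mul, ← tr_add, ← tr_add, ← tr_one θ]
    congr 1; ext t
    simp only [ContinuousMap.add_apply, ContinuousMap.mul_apply, ContinuousMap.one_apply, ka_sq,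
      kd_sq]
    rw [kh_eq]; ring
  · rw [← tr_mul, ← tr_mul, ← tr_add, ← tr_one θ]
    congr 1; ext t
    simp only [ContinuousMap.add_apply, ContinuousMap.mul_apply, ContinuousMap.one_apply, kq_sq]
    ring
  · refine tr_norm θ _ _ zero_le_one fun t => ?_
    have h := kh_mem t
    rw [abs_le]; constructor <;> linarith [h.1, h.2]
  · rw [← tr_mul]
    refine tr_norm θ _ _ zero_le_one fun t => ?_
    have h := kh_mem t
    have h1 := k1_mem t
    have h0 := k0_mem t
    have e := kh_eq t
    rw [ContinuousMap.mul_apply, kd_sq, abs_of_nonneg (mul_nonneg h1.1 (by linarith [h.1]))]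
    nlinarith [h.1, h.2, h1.1, h1.2, h0.1, h0.2]
  · refine tr_norm θ _ _ zero_le_one fun t => ?_
    have h := kh_mem t
    have h1 := k1_mem t
    rw [ContinuousMap.mul_apply, abs_of_nonneg (mul_nonneg h.1 h1.1)]
    nlinarith [h.1, h.2, h1.1, h1.2]
  · refine tr_norm θ _ _ zero_le_one fun t => ?_
    have h := kh_mem t
    have h1 := k1_mem t
    have h0 := k0_mem t
    have e := kh_eq t
    apply abs_le_of_sq_le_sq _ zero_le_one
    rw [sq, ka_sq]
    nlinarith [h.1, h.2, h1.1, h1.2, h0.1, h0.2]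
  · rw [← tr_mul, ← tr_mul, ← tr_add]
    refine tr_norm θ _ _ zero_le_one fun t => ?_
    have h := kh_mem t
    have h1 := k1_mem t
    have h0 := k0_mem t
    have e := kh_eq t
    have e2 : k0 t = 1 - kh t - k1 t := by linarith
    rw [ContinuousMap.add_apply, ContinuousMap.mul_apply, ContinuousMap.mul_apply, ka_sq,
      abs_of_nonneg (add_nonneg (mul_self_nonneg _) (mul_nonneg h0.1 (by linarith [h.1]))), e2]
    nlinarith [h.1, h.2, h1.1, h1.2, h0.1, h0.2]
  · rw [← tr_mul, ← tr_mul]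
    refine tr_norm θ _ _ (by norm_num) fun t => ?_
    have h := kh_mem t
    have h1 := k1_mem t
    have h0 := k0_mem t
    have e := kh_eq t
    have h2 : k1 t ≤ 1 - kh t := by linarith [h0.1]
    rw [ContinuousMap.mul_apply, ContinuousMap.mul_apply, kd_sq,
      abs_of_nonneg (mul_nonneg (mul_nonneg h1.1 (by linarith [h.1])) h.1)]
    have h3 : k1 t * (1 + kh t) * kh t ≤ (1 - kh t) * (1 + kh t) * kh t := by
      have := h.1
      gcongr
    have := h.1
    nlinarith [mul_nonneg h.1 (sq_nonneg (kh t - 1 / 2)), sq_nonneg (kh t - 1 / 2),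
      mul_nonneg h.1 (sq_nonneg (kh t - 3 / 5)), sq_nonneg (kh t - 3 / 5)]
  · rw [← tr_one θ, ← tr_add]
    refine tr_norm θ _ _ (by norm_num) fun t => ?_
    have h := kh_mem t
    rw [ContinuousMap.add_apply, ContinuousMap.one_apply, abs_le]
    constructor <;> linarith [h.1, h.2]
  · rw [← tr_one θ, ← tr_add, ← tr_mul, ← tr_mul, ← tr_mul]
    congr 1; ext t
    simp only [ContinuousMap.add_apply, ContinuousMap.mul_apply, ContinuousMap.one_apply, kd_sq]
    ring
  · rw [← tr_one θ, ← tr_add, ← tr_mul, ← tr_mul, ← tr_mul]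
    congr 1; ext t
    simp only [ContinuousMap.add_apply, ContinuousMap.mul_apply, ContinuousMap.one_apply, kd_sq]
    ring
  · rw [← tr_mul, ← tr_zero θ]
    congr 1; ext t
    rcases ka_k1 t with h | h <;> simp [h]
  · rw [← tr_mul, ← tr_zero θ]
    congr 1; ext t
    rcases ka_k1 t with h | h <;> simp [h]

end fns


section fin
variable {A E : Type} [CStarAlgebra A] [CStarAlgebra E]

theorem susp_closed : IsClosed (susp A : Set C(I, A)) := by
  have h : (susp A : Set C(I, A)) = {x | x 0 = 0} ∩ {x | x 1 = 0} := rfl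
  rw [h]
  exact (isClosed_eq (continuous_eval_const 0) continuous_const).inter
    (isClosed_eq (continuous_eval_const 1) continuous_const)

theorem nu_norm (ν : susp A →⋆ₙₐ[ℂ] E) (x : susp A) : ‖ν x‖ ≤ ‖(x : C(I, A))‖ := by
  letI : NonUnitalCStarAlgebra (susp A) :=
    NonUnitalStarSubalgebra.nonUnitalCStarAlgebra (susp A) (h_closed := susp_closed)
  exact NonUnitalStarAlgHom.norm_apply_le ν x

theorem nu_l {θ : C(I, ℂ) →⋆ₐ[ℂ] E} {ν : susp A →⋆ₙₐ[ℂ] E} (h : Compatible θ ν)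
    (k : C(I, ℝ)) (x : susp A) : tr θ k * ν x = ν (hsmul (ofRealCM k) x) := ((h _ x).1).symm

theorem nu_c {θ : C(I, ℂ) →⋆ₐ[ℂ] E} {ν : susp A →⋆ₙₐ[ℂ] E} (h : Compatible θ ν)
    (k : C(I, ℝ)) (x : susp A) : ν x * tr θ k = tr θ k * ν x := ((h _ x).2).symm.trans (h _ x).1

theorem nu_cm {θ : C(I, ℂ) →⋆ₐ[ℂ] E} {ν : susp A →⋆ₙₐ[ℂ] E} (h : Compatible θ ν)
    (x : susp A) : Cm (tr θ kh) (tr θ ka) (tr θ kd) (ν x) :=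
  ⟨nu_c h _ x, nu_c h _ x, nu_c h _ x⟩

theorem nu_zero {θ : C(I, ℂ) →⋆ₐ[ℂ] E} {ν : susp A →⋆ₙₐ[ℂ] E} (h : Compatible θ ν)
    (k : C(I, ℝ)) (x : susp A) (hx : ∀ t, k t = 0 ∨ (x : C(I, A)) t = 0) :
    tr θ k * ν x = 0 := by
  rw [nu_l h, ← map_zero ν]
  congr 1
  apply Subtype.ext
  ext t
  rcases hx t with h | h <;> simp [hsmul, ofRealCM, h]

theorem nu_one {θ : C(I, ℂ) →⋆ₐ[ℂ] E} {ν : susp A →⋆ₙₐ[ℂ] E} (h : Compatible θ ν)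
    (k : C(I, ℝ)) (x : susp A) (hx : ∀ t, k t = 1 ∨ (x : C(I, A)) t = 0) :
    tr θ k * ν x = ν x := by
  rw [nu_l h]
  congr 1
  apply Subtype.ext
  ext t
  rcases hx t with h | h <;> simp [hsmul, ofRealCM, h]

def NL (ν₀ ν₁ : susp A →⋆ₙₐ[ℂ] E) : susp A →ₗ[ℂ] Matrix (Fin 2) (Fin 2) E where
  toFun x := NM (ν₀ x) (ν₁ x)
  map_add' x y := by
    ext i j; fin_cases i <;> fin_cases j <;> simp [NM]
  map_smul' c x := by
    ext i j; fin_cases i <;> fin_cases j <;> simp [NM]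

theorem NL_apply (ν₀ ν₁ : susp A →⋆ₙₐ[ℂ] E) (x : susp A) : NL ν₀ ν₁ x = NM (ν₀ x) (ν₁ x) := rfl
theorem NL_mul (ν₀ ν₁ : susp A →⋆ₙₐ[ℂ] E) (x y : susp A) :
    NL ν₀ ν₁ (x * y) = NL ν₀ ν₁ x * NL ν₀ ν₁ y := by
  rw [NL_apply, NL_apply, NL_apply, NM, NM, NM, Matrix.mul_fin_two]; simp
theorem NL_star (ν₀ ν₁ : susp A →⋆ₙₐ[ℂ] E) (x : susp A) :
    NL ν₀ ν₁ (star x) = star (NL ν₀ ν₁ x) := by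
  rw [NL_apply, NL_apply, NM, NM, star2]; simp [map_star]

def RL (T : Matrix (Fin 2) (Fin 2) E) (ν₀ ν₁ : susp A →⋆ₙₐ[ℂ] E) :
    susp A →ₗ[ℂ] Matrix (Fin 2) (Fin 2) E where
  toFun x := T * NL ν₀ ν₁ x * star T
  map_add' x y := by rw [map_add, mul_add, add_mul]
  map_smul' c x := by
    rw [map_smul, RingHom.id_apply, mul_smul_comm, smul_mul_assoc]

theorem RL_apply (T : Matrix (Fin 2) (Fin 2) E) (ν₀ ν₁ : susp A →⋆ₙₐ[ℂ] E) (x : susp A) :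
    RL T ν₀ ν₁ x = T * NM (ν₀ x) (ν₁ x) * star T := rfl

theorem RL_cp (T : Matrix (Fin 2) (Fin 2) E) (ν₀ ν₁ : susp A →⋆ₙₐ[ℂ] E) :
    IsCompletelyPositive (B := susp A) (C := Matrix (Fin 2) (Fin 2) E) (RL T ν₀ ν₁) := by
  rintro n M ⟨y, rfl⟩
  refine ⟨Matrix.of fun k j => NL ν₀ ν₁ (y k j) * star T, ?_⟩
  ext1 i j
  rw [Matrix.map_apply, Matrix.mul_apply, Matrix.mul_apply, map_sum]
  refine Finset.sum_congr rfl fun k _ => ?_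
  rw [Matrix.star_apply, Matrix.star_apply, Matrix.of_apply, Matrix.of_apply]
  change T * NL ν₀ ν₁ (star (y k i) * y k j) * star T = _
  rw [NL_mul, NL_star, star_mul, star_star, mul_assoc, mul_assoc, mul_assoc]

theorem trc (τ : E →L[ℂ] ℂ) (h : IsTracialState τ) (M N : Matrix (Fin 2) (Fin 2) E) :
    τ ((M * N) 0 0) + τ ((M * N) 1 1) = τ ((N * M) 0 0) + τ ((N * M) 1 1) := by
  simp only [Matrix.mul_apply, Fin.sum_univ_two, map_add]
  rw [h.2.2 (N 0 0), h.2.2 (N 0 1), h.2.2 (N 1 0), h.2.2 (N 1 1)]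
  ring

theorem StS {v u f a d p q m : E} (R : PRel v u f a d p q m) (X0 X1 : E) :
    star (SM v f a d) * SM v f a d * NM X0 X1 =
      !![(f * f + a * a) * X0, f * u * d * X1; d * v * f * X0, d * d * X1] := by
  rw [SM, NM, star2, Matrix.mul_fin_two, Matrix.mul_fin_two]
  simp [R.sf, R.sv, R.sd, R.sa, mul_assoc, asl' R.uv]

end fin

/-- **The patching lemma** (Lemma 4.1 of Tikuisis–White–Winter, "Quasidiagonality of nuclear
C*-algebras"). There is a partition of unity `f₀, f_{1/2}, f₁` of `C([0,1])` with `f_{1/2}`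
supported in `(1/3,2/3)` such that: for all unital C*-algebras `A`, `E`, every unital
*-homomorphism `θ : C([0,1]) → E`, all `θ`-compatible *-homomorphisms
`ν₀, ν₁ : C₀((0,1),A) → E` and every unitary `v ∈ E`, there is a completely positive map
`ρ : C₀((0,1),A) → M₂(E)` restricting to `ν₀ ⊕ 0` on `(0,1/3)` and `ν₁ ⊕ 0` on `(2/3,1)`,
matching traces, and satisfying the approximate compatibility and approximate multiplicativity
estimates (iv) and (v). -/
theorem patching_lemma :
    ∃ f0 fh f1 : C(I, ℝ),
      (∀ t, f0 t ∈ Set.Icc (0 : ℝ) 1) ∧ (∀ t, fh t ∈ Set.Icc (0 : ℝ) 1) ∧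
      (∀ t, f1 t ∈ Set.Icc (0 : ℝ) 1) ∧
      (∀ t, f0 t + fh t + f1 t = 1) ∧
      (∀ t : I, (t : ℝ) ∉ Set.Ioo (1/3 : ℝ) (2/3) → fh t = 0) ∧
      ∀ (A : Type) [CStarAlgebra A], ∀ (E : Type) [CStarAlgebra E],
        ∀ (θ : C(I, ℂ) →⋆ₐ[ℂ] E) (ν₀ ν₁ : susp A →⋆ₙₐ[ℂ] E) (v : E),
          Compatible θ ν₀ → Compatible θ ν₁ → v ∈ unitary E →
          ∃ ρ : susp A →ₗ[ℂ] Matrix (Fin 2) (Fin 2) E,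
            IsCompletelyPositive (B := susp A) (C := Matrix (Fin 2) (Fin 2) E) ρ ∧
            -- (i) : ρ recovers ν₀ ⊕ 0 on (0, 1/3)
            (∀ x : susp A,
              (∀ t : I, (t : ℝ) ∉ Set.Ioo (0 : ℝ) (1/3) → (x : C(I, A)) t = 0) →
              ρ x = !![ν₀ x, 0; 0, 0]) ∧
            -- (ii) : ρ recovers ν₁ ⊕ 0 on (2/3, 1)
            (∀ x : susp A,
              (∀ t : I, (t : ℝ) ∉ Set.Ioo (2/3 : ℝ) 1 → (x : C(I, A)) t = 0) →
              ρ x = !![ν₁ x, 0; 0, 0]) ∧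
            -- (iii) : traces
            (∀ τ : E →L[ℂ] ℂ, IsTracialState τ → (∀ x : susp A, τ (ν₀ x) = τ (ν₁ x)) →
              ∀ x : susp A, τ (ρ x 0 0) + τ (ρ x 1 1) = τ (ν₀ x)) ∧
            -- (iv) : approximate compatibility with θ^{⊕2}
            (∀ (h : C(I, ℂ)) (x : susp A),
              cstarNorm (ρ (hsmul h x) - Matrix.diagonal (fun _ => θ h) * ρ x) ≤
                (‖θ (ofRealCM fh) * v - v * θ (ofRealCM fh)‖ * ‖h‖ +
                  ‖θ (h * ofRealCM fh) * v - v * θ (h * ofRealCM fh)‖) *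
                  ‖(x : C(I, A))‖) ∧
            -- (v) : approximate multiplicativity
            (∀ x y : susp A,
              cstarNorm (ρ (x * y) - ρ x * ρ y) ≤
                (7 * ‖v * θ (ofRealCM fh) - θ (ofRealCM fh) * v‖ +
                  2 * ‖v * θ (ofRealCM f0 * ofRealCM fh) - θ (ofRealCM f0 * ofRealCM fh) * v‖ +
                  5 * ‖v * θ (ofRealCM fh * ofRealCM f1) - θ (ofRealCM fh * ofRealCM f1) * v‖) *
                  ‖(x : C(I, A))‖ * ‖(y : C(I, A))‖ +
                (‖ν₁ (hsmul (ofRealCM fh * ofRealCM f1) x) * v -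
                    v * ν₀ (hsmul (ofRealCM fh * ofRealCM f1) x)‖ +
                  ‖ν₁ (hsmul (ofRealCM fh) x) * v - v * ν₀ (hsmul (ofRealCM fh) x)‖) *
                  ‖(y : C(I, A))‖) := by
  refine ⟨k0, kh, k1, k0_mem, kh_mem, k1_mem, fun t => by rw [kh_eq]; ring, ?_, ?_⟩
  · intro t ht
    rw [kh_eq]
    by_cases h : (t : ℝ) ≤ 1 / 3
    · rw [(k0_left t h).1, (k0_left t h).2.1]; norm_num
    · have h2 : 2 / 3 ≤ (t : ℝ) := by
        by_contra h3
        exact ht ⟨lt_of_not_ge h, lt_of_not_ge h3⟩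
      rw [(k0_right t h2).1, (k0_right t h2).2.1]; norm_num
  intro A _ E _ θ ν₀ ν₁ v c0 c1 hv
  have R := tr_rel θ v hv
  have hm : θ (ofRealCM kh * ofRealCM k1) = tr θ (kh * k1) := by
    rw [tr_mul, map_mul]; rfl
  have UMl : ∀ X Y : Matrix (Fin 2) (Fin 2) E, UM (tr θ kp) (tr θ kq) *
      SM v (tr θ kh) (tr θ ka) (tr θ kd) * X *
      star (UM (tr θ kp) (tr θ kq) * SM v (tr θ kh) (tr θ ka) (tr θ kd)) =
      UM (tr θ kp) (tr θ kq) * (SM v (tr θ kh) (tr θ ka) (tr θ kd) * X *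
        star (SM v (tr θ kh) (tr θ ka) (tr θ kd))) * star (UM (tr θ kp) (tr θ kq)) := by
    intro X Y
    rw [star_mul]; simp only [mul_assoc]
  refine ⟨RL (UM (tr θ kp) (tr θ kq) * SM v (tr θ kh) (tr θ ka) (tr θ kd)) ν₀ ν₁,
    RL_cp _ _ _, ?_, ?_, ?_, ?_, ?_⟩
  · intro x hx
    have key : ∀ t : I, (k0 t = 1 ∧ k1 t = 0 ∧ kp t = 0) ∨ (x : C(I, A)) t = 0 := by
      intro t
      by_cases h : (t : ℝ) ≤ 1 / 3
      · exact Or.inl (k0_left t h)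
      · exact Or.inr (hx t fun h2 => h h2.2.le)
    have hf : tr θ kh * ν₀ x = 0 := nu_zero c0 _ _ fun t => (key t).imp_left fun h => by
      rw [kh_eq, h.1, h.2.1]; norm_num
    have ha : tr θ ka * ν₀ x = ν₀ x := nu_one c0 _ _ fun t => (key t).imp_left fun h => by
      simp [ka, kh_eq, h.1, h.2.1]
    have hd : tr θ kd * ν₁ x = 0 := nu_zero c1 _ _ fun t => (key t).imp_left fun h => by
      simp [kd, kh_eq, h.1, h.2.1]
    have hp : tr θ kp * ν₀ x = 0 := nu_zero c0 _ _ fun t => (key t).imp_left fun h => h.2.2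
    have hq : tr θ kq * ν₀ x = ν₀ x := nu_one c0 _ _ fun t => (key t).imp_left fun h => by
      simp [kq, h.2.2]
    have hp' := (nu_c c0 kp x).trans hp
    have hq' := (nu_c c0 kq x).trans hq
    rw [RL_apply, UMl _ 0, SNS R (nu_cm c0 x) (nu_cm c1 x)]
    simp only [mul_assoc, ha, hd, mul_zero, hf, add_zero, asl' hf, zero_mul]
    rw [UM, star2, Matrix.mul_fin_two, Matrix.mul_fin_two]
    simp [R.sp, R.sq, hp, hq, hp', hq']
  · intro x hx
    have key : ∀ t : I, (k0 t = 0 ∧ k1 t = 1 ∧ kp t = 1) ∨ (x : C(I, A)) t = 0 := by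
      intro t
      by_cases h : 2 / 3 ≤ (t : ℝ)
      · exact Or.inl (k0_right t h)
      · exact Or.inr (hx t fun h2 => h h2.1.le)
    have hf : tr θ kh * ν₀ x = 0 := nu_zero c0 _ _ fun t => (key t).imp_left fun h => by
      rw [kh_eq, h.1, h.2.1]; norm_num
    have ha : tr θ ka * ν₀ x = 0 := nu_zero c0 _ _ fun t => (key t).imp_left fun h => by
      simp [ka, kh_eq, h.1, h.2.1]
    have hd : tr θ kd * ν₁ x = ν₁ x := nu_one c1 _ _ fun t => (key t).imp_left fun h => by
      simp [kd, kh_eq, h.1, h.2.1]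
    have hp : tr θ kp * ν₁ x = ν₁ x := nu_one c1 _ _ fun t => (key t).imp_left fun h => h.2.2
    have hq : tr θ kq * ν₁ x = 0 := nu_zero c1 _ _ fun t => (key t).imp_left fun h => by
      simp [kq, h.2.2]
    have hp' := (nu_c c1 kp x).trans hp
    have hq' := (nu_c c1 kq x).trans hq
    rw [RL_apply, UMl _ 0, SNS R (nu_cm c0 x) (nu_cm c1 x)]
    simp only [mul_assoc, ha, hd, mul_zero, hf, zero_add, asl' hf, asl' ha, zero_mul]
    rw [UM, star2, Matrix.mul_fin_two, Matrix.mul_fin_two]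
    simp [R.sp, R.sq, hp, hq, hp', hq']
  · intro τ hτ hh x
    rw [RL_apply, trc τ hτ, ← mul_assoc]
    have e : star (UM (tr θ kp) (tr θ kq) * SM v (tr θ kh) (tr θ ka) (tr θ kd)) *
        (UM (tr θ kp) (tr θ kq) * SM v (tr θ kh) (tr θ ka) (tr θ kd)) =
        star (SM v (tr θ kh) (tr θ ka) (tr θ kd)) * SM v (tr θ kh) (tr θ ka) (tr θ kd) := by
      rw [star_mul, mul_assoc, ← mul_assoc (star (UM _ _)), UM_unit' R, one_mul]
    rw [e, StS R]
    simp only [Matrix.of_apply, Matrix.cons_val', Matrix.cons_val_zero, Matrix.cons_val_one,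
      Matrix.cons_val_fin_one]
    rw [← tr_mul θ kd kd, nu_l c1, ← hh, ← nu_l c0, tr_mul, ← map_add, ← add_mul, R.one, one_mul]
  · intro h x
    rw [RL_apply, RL_apply, (c0 h x).1, (c1 h x).1]
    refine (compat_bound R (tr_comm θ _ _) (tr_comm θ _ _) (tr_comm θ _ _) (tr_comm θ _ _)
      (tr_comm θ _ _) (nu_norm ν₀ x)).trans ?_
    rw [map_mul]
    have hh : ‖θ h‖ ≤ ‖h‖ := NonUnitalStarAlgHom.norm_apply_le θ h
    change (‖tr θ kh * v - v * tr θ kh‖ * ‖θ h‖ + ‖θ h * tr θ kh * v - v * (θ h * tr θ kh)‖) * _ ≤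
      (‖tr θ kh * v - v * tr θ kh‖ * ‖h‖ + ‖θ h * tr θ kh * v - v * (θ h * tr θ kh)‖) * _
    gcongr
  · intro x y
    have b := mult_bound R (nu_cm c0 x) (nu_cm c1 x) (nu_cm c0 y) (nu_cm c1 y)
      (nu_norm ν₀ x) (nu_norm ν₁ x) (nu_norm ν₀ y) (nu_norm ν₁ y)
    have e : ∀ X Y Z : Matrix (Fin 2) (Fin 2) E,
        UM (tr θ kp) (tr θ kq) * X * star (UM (tr θ kp) (tr θ kq)) -
        UM (tr θ kp) (tr θ kq) * Y * star (UM (tr θ kp) (tr θ kq)) *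
        (UM (tr θ kp) (tr θ kq) * Z * star (UM (tr θ kp) (tr θ kq))) =
        UM (tr θ kp) (tr θ kq) * (X - Y * Z) * star (UM (tr θ kp) (tr θ kq)) := by
      intro X Y Z
      have := UM_unit' R
      linear_combination (norm := noncomm_ring) -(UM (tr θ kp) (tr θ kq) * Y * this * Z *
        star (UM (tr θ kp) (tr θ kq)))
    rw [RL_apply, RL_apply, RL_apply, UMl _ 0, UMl _ 0, UMl _ 0, e, map_mul, map_mul]
    refine (cn_conj _ _ (UM_unit R)).trans (b.trans ?_)
    rw [hm, ← nu_l c0 kh, ← nu_l c1 kh]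
    change _ ≤ (7 * ‖v * tr θ kh - tr θ kh * v‖ + _ + _) * _ * _ + _
    have n1 := norm_nonneg (v * tr θ kh - tr θ kh * v)
    have n2 := norm_nonneg (v * tr θ (kh * k1) - tr θ (kh * k1) * v)
    have n3 := norm_nonneg (v * θ (ofRealCM k0 * ofRealCM kh) - θ (ofRealCM k0 * ofRealCM kh) * v)
    gcongr
    · linarith
    · norm_num
    · exact le_add_of_nonneg_left (norm_nonneg _)
end
end

section
/- Let A and E be unital C*-algebras, θ : C([0,1],ℂ) → E a unital *-homomorphism, ν₀, ν₁ : C₀((0,1),A) → E *-homomorphisms compatible with θ, and v ∈ E a unitary such that v ν₀(x) v* = ν₁(x) for every x ∈ C₀((0,1),A) with x(t) = 0 for all t ∉ (1/3, 2/3). Then there exists a *-homomorphism ρ : C₀((0,1),A) → M₂(E) such that: (i) for every x with x(t) = 0 for all t ∉ (0, 1/3), ρ(x) is the matrix with ν₀(x) in the (1,1) entry and 0 elsewhere; (ii) for every x with x(t) = 0 for all t ∉ (2/3, 1), ρ(x) is the matrix with ν₁(x) in the (1,1) entry and 0 elsewhere; (iii) for every tracial state τ on E with τ∘ν₀ = τ∘ν₁,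 one has (τ ⊗ Tr₂)(ρ(x)) = τ(ν₀(x)) for all x; and (iv) ρ(h·x) = θ^{⊕2}(h)ρ(x) = ρ(x)θ^{⊕2}(h) for all h ∈ C([0,1],ℂ) and x ∈ C₀((0,1),A). -/
open scoped ComplexOrder unitInterval ENNReal

set_option synthInstance.maxHeartbeats 1000000
set_option maxHeartbeats 1000000

noncomputable section

theorem hsmul_apply' {A : Type} [CStarAlgebra A] (h : C(I, ℂ)) (x : susp A) (t : I) :
    (hsmul h x : C(I, A)) t = h t • (x : C(I, A)) t := rfl

theorem susp_ext {A : Type} [CStarAlgebra A] {x y : susp A}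
    (h : ∀ t, (x : C(I, A)) t = (y : C(I, A)) t) : x = y :=
  Subtype.ext (ContinuousMap.ext h)

theorem hsmul_mul_hsmul {A : Type} [CStarAlgebra A] (h k : C(I, ℂ)) (x y : susp A) :
    hsmul h x * hsmul k y = hsmul (h * k) (x * y) := by
  apply susp_ext
  intro t
  change (h t • (x : C(I, A)) t) * (k t • (y : C(I, A)) t)
    = (h t * k t) • ((x : C(I, A)) t * (y : C(I, A)) t)
  rw [smul_mul_smul_comm]

theorem hsmul_hsmul {A : Type} [CStarAlgebra A] (h k : C(I, ℂ)) (x : susp A) :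
    hsmul h (hsmul k x) = hsmul (h * k) x := by
  apply susp_ext
  intro t
  change h t • k t • (x : C(I, A)) t = (h t * k t) • (x : C(I, A)) t
  rw [smul_smul]

theorem hsmul_add_left {A : Type} [CStarAlgebra A] (h k : C(I, ℂ)) (x : susp A) :
    hsmul (h + k) x = hsmul h x + hsmul k x := by
  apply susp_ext
  intro t
  change (h t + k t) • (x : C(I, A)) t = h t • (x : C(I, A)) t + k t • (x : C(I, A)) t
  rw [add_smul]

theorem hsmul_add_right {A : Type} [CStarAlgebra A] (h : C(I, ℂ)) (x y : susp A) :
    hsmul h (x + y) = hsmul h x + hsmul h y := by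
  apply susp_ext
  intro t
  change h t • ((x : C(I, A)) t + (y : C(I, A)) t)
    = h t • (x : C(I, A)) t + h t • (y : C(I, A)) t
  rw [smul_add]

theorem hsmul_zero_right {A : Type} [CStarAlgebra A] (h : C(I, ℂ)) :
    hsmul h (0 : susp A) = 0 := by
  apply susp_ext
  intro t
  change h t • (0 : A) = 0
  rw [smul_zero]

theorem hsmul_zero_left {A : Type} [CStarAlgebra A] (x : susp A) :
    hsmul 0 x = 0 := by
  apply susp_ext
  intro t
  change (0 : ℂ) • (x : C(I, A)) t = 0
  rw [zero_smul]

theorem hsmul_one_left {A : Type} [CStarAlgebra A] (x : susp A) :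
    hsmul 1 x = x := by
  apply susp_ext
  intro t
  change (1 : ℂ) • (x : C(I, A)) t = _
  rw [one_smul]

theorem hsmul_smul_right {A : Type} [CStarAlgebra A] (h : C(I, ℂ)) (z : ℂ) (x : susp A) :
    hsmul h (z • x) = z • hsmul h x := by
  apply susp_ext
  intro t
  change h t • z • (x : C(I, A)) t = z • h t • (x : C(I, A)) t
  rw [smul_comm]

theorem hsmul_star {A : Type} [CStarAlgebra A] (h : C(I, ℂ)) (x : susp A) :
    hsmul h (star x) = star (hsmul (star h) x) := by
  apply susp_ext
  intro t
  change h t • star ((x : C(I, A)) t) = star (star (h t) • (x : C(I, A)) t)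
  rw [star_smul, star_star]

theorem exists_cutoffs : ∃ c s d : C(I, ℂ),
    star c = c ∧ star s = s ∧ star d = d ∧ c * s = 0 ∧ c * c + s * s + d * d = 1 ∧
    (∀ t : I, (t : ℝ) ≤ 1/3 → c t = 1 ∧ s t = 0 ∧ d t = 0) ∧
    (∀ t : I, 2/3 ≤ (t : ℝ) → c t = 0 ∧ s t = 1 ∧ d t = 0) := by
  let a : ℝ → ℝ := fun t => max 0 (min 1 (6 * t - 2))
  let b : ℝ → ℝ := fun t => max 0 (min 1 (6 * t - 3))
  have ha : Continuous a := by fun_prop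
  have hb : Continuous b := by fun_prop
  have hb0 : ∀ t, 0 ≤ b t := fun t => le_max_left _ _
  have ha1 : ∀ t, a t ≤ 1 := fun t => max_le zero_le_one (min_le_left _ _)
  have hba : ∀ t, b t ≤ a t := fun t =>
    max_le_max le_rfl (min_le_min le_rfl (by linarith))
  have hab : ∀ t, t ≤ 1/2 → b t = 0 := fun t ht =>
    max_eq_left ((min_le_right _ _).trans (by linarith))
  have hab' : ∀ t, 1/2 ≤ t → a t = 1 := fun t ht => by
    simp only [a]
    rw [min_eq_left (by linarith), max_eq_right zero_le_one]
  have haL : ∀ t, t ≤ 1/3 → a t = 0 := fun t ht =>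
    max_eq_left ((min_le_right _ _).trans (by linarith))
  have hbR : ∀ t, 2/3 ≤ t → b t = 1 := fun t ht => by
    simp only [b]
    rw [min_eq_left (by linarith), max_eq_right zero_le_one]
  let c' : C(I, ℝ) := ⟨fun t => Real.sqrt (1 - a t), by fun_prop⟩
  let s' : C(I, ℝ) := ⟨fun t => Real.sqrt (b t), by fun_prop⟩
  let d' : C(I, ℝ) := ⟨fun t => Real.sqrt (a t - b t), by fun_prop⟩
  have hst : ∀ f : C(I, ℝ), star (ofRealCM f) = ofRealCM f := by
    intro f
    ext t
    exact Complex.conj_ofReal _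
  refine ⟨ofRealCM c', ofRealCM s', ofRealCM d', hst _, hst _, hst _, ?_, ?_, ?_, ?_⟩
  · ext t
    change ((Real.sqrt (1 - a t) : ℝ) : ℂ) * ((Real.sqrt (b t) : ℝ) : ℂ) = 0
    rcases le_total (t : ℝ) (1/2) with h | h
    · rw [hab _ h]; simp
    · rw [hab' _ h]; simp
  · ext t
    change ((Real.sqrt (1 - a t) : ℝ) : ℂ) * ((Real.sqrt (1 - a t) : ℝ) : ℂ)
      + ((Real.sqrt (b t) : ℝ) : ℂ) * ((Real.sqrt (b t) : ℝ) : ℂ)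
      + ((Real.sqrt (a t - b t) : ℝ) : ℂ) * ((Real.sqrt (a t - b t) : ℝ) : ℂ) = 1
    rw [← Complex.ofReal_mul, ← Complex.ofReal_mul, ← Complex.ofReal_mul,
      Real.mul_self_sqrt (by linarith [ha1 t]), Real.mul_self_sqrt (hb0 t),
      Real.mul_self_sqrt (by linarith [hba t])]
    push_cast
    ring
  · intro t ht
    change ((Real.sqrt (1 - a t) : ℝ) : ℂ) = 1 ∧ ((Real.sqrt (b t) : ℝ) : ℂ) = 0
      ∧ ((Real.sqrt (a t - b t) : ℝ) : ℂ) = 0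
    rw [haL _ ht, hab _ (by linarith)]
    simp
  · intro t ht
    change ((Real.sqrt (1 - a t) : ℝ) : ℂ) = 0 ∧ ((Real.sqrt (b t) : ℝ) : ℂ) = 1
      ∧ ((Real.sqrt (a t - b t) : ℝ) : ℂ) = 0
    rw [hab' _ (by linarith), hbR _ ht]
    simp

/-- **Exact patching.** If `ν₀` and `ν₁` are `θ`-compatible *-homomorphisms
`C₀((0,1),A) → E` which are exactly conjugate by a unitary `v` over the middle third
`(1/3,2/3)`, then they can be patched to a single *-homomorphism `ρ : C₀((0,1),A) → M₂(E)`
recovering `ν₀` on `(0,1/3)` and `ν₁` on `(2/3,1)`, preserving traces (up to the factor coming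
from `Tr₂`), and compatible with `θ^{⊕2}`. -/
theorem exact_patching {A E : Type} [CStarAlgebra A] [CStarAlgebra E]
    (θ : C(I, ℂ) →⋆ₐ[ℂ] E) (ν₀ ν₁ : susp A →⋆ₙₐ[ℂ] E)
    (hν₀ : Compatible θ ν₀) (hν₁ : Compatible θ ν₁)
    (v : E) (hv : v ∈ unitary E)
    (hmid : ∀ x : susp A,
      (∀ t : I, (t : ℝ) ∉ Set.Ioo (1/3 : ℝ) (2/3) → (x : C(I, A)) t = 0) →
      v * ν₀ x * star v = ν₁ x) :
    ∃ ρ : susp A →⋆ₙₐ[ℂ] Matrix (Fin 2) (Fin 2) E,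
      (∀ x : susp A,
        (∀ t : I, (t : ℝ) ∉ Set.Ioo (0 : ℝ) (1/3) → (x : C(I, A)) t = 0) →
        ρ x = !![ν₀ x, 0; 0, 0]) ∧
      (∀ x : susp A,
        (∀ t : I, (t : ℝ) ∉ Set.Ioo (2/3 : ℝ) 1 → (x : C(I, A)) t = 0) →
        ρ x = !![ν₁ x, 0; 0, 0]) ∧
      (∀ τ : E →L[ℂ] ℂ, IsTracialState τ → (∀ x : susp A, τ (ν₀ x) = τ (ν₁ x)) →
        ∀ x : susp A, τ (ρ x 0 0) + τ (ρ x 1 1) = τ (ν₀ x)) ∧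
      (∀ (h : C(I, ℂ)) (x : susp A),
        ρ (hsmul h x) = Matrix.diagonal (fun _ => θ h) * ρ x ∧
        ρ (hsmul h x) = ρ x * Matrix.diagonal (fun _ => θ h)) := by
  obtain ⟨c, s, d, hc, hs, hd, hcs, hsum, hL, hR⟩ := exists_cutoffs
  have hvv : star v * v = 1 := (Unitary.mem_iff.mp hv).1
  have hvv' : v * star v = 1 := (Unitary.mem_iff.mp hv).2
  have hsc : s * c = 0 := by rw [mul_comm, hcs]
  -- products
  have p0 : ∀ h k x y, ν₀ (hsmul h x) * ν₀ (hsmul k y) = ν₀ (hsmul (h * k) (x * y)) := by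
    intro h k x y; rw [← map_mul, hsmul_mul_hsmul]
  have p1 : ∀ h k x y, ν₁ (hsmul h x) * ν₁ (hsmul k y) = ν₁ (hsmul (h * k) (x * y)) := by
    intro h k x y; rw [← map_mul, hsmul_mul_hsmul]
  have x01 : ∀ h k x y, h * k = 0 → ν₀ (hsmul h x) * ν₁ (hsmul k y) = 0 := by
    intro h k x y e
    rw [(hν₀ h x).2, (hν₁ k y).1, mul_assoc, ← mul_assoc (θ h), ← map_mul, e]
    simp
  have x10 : ∀ h k x y, h * k = 0 → ν₁ (hsmul h x) * ν₀ (hsmul k y) = 0 := by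
    intro h k x y e
    rw [(hν₁ h x).2, (hν₀ k y).1, mul_assoc, ← mul_assoc (θ h), ← map_mul, e]
    simp
  have hm : ∀ h x, v * ν₀ (hsmul (h * d) x) * star v = ν₁ (hsmul (h * d) x) := by
    intro h x
    apply hmid
    intro t ht
    have hdt : d t = 0 := by
      by_contra hne
      apply ht
      constructor
      · by_contra h1
        exact hne (hL t (not_lt.mp h1)).2.2
      · by_contra h1
        exact hne (hR t (not_lt.mp h1)).2.2
    rw [hsmul_apply', ContinuousMap.mul_apply, hdt]
    simp
  have m1 : ∀ h x, v * ν₀ (hsmul (h * d) x) = ν₁ (hsmul (h * d) x) * v := by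
    intro h x
    rw [← hm, mul_assoc, hvv, mul_one]
  have m2 : ∀ h x, ν₀ (hsmul (h * d) x) * star v = star v * ν₁ (hsmul (h * d) x) := by
    intro h x
    rw [← hm, ← mul_assoc, ← mul_assoc, hvv, one_mul]
  have sc : ∀ h x, star h = h → hsmul h (star x : susp A) = star (hsmul h x) := by
    intro h x e
    rw [hsmul_star, e]
  have scc : star (c * c) = c * c := by rw [star_mul, hc]
  have sss : star (s * s) = s * s := by rw [star_mul, hs]
  have sdd : star (d * d) = d * d := by rw [star_mul, hd]
  have scd : star (c * d) = c * d := by rw [star_mul, hc, hd, mul_comm]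
  have ssd : star (s * d) = s * d := by rw [star_mul, hs, hd, mul_comm]
  have ec : c * c * (c * c) + c * d * (c * d) = c * c := by
    linear_combination (c * c) * hsum - c * s * hcs
  have es : s * s * (s * s) + s * d * (s * d) = s * s := by
    linear_combination (s * s) * hsum - c * s * hcs
  have ecd : c * c * (c * d) + c * d * (d * d) = c * d := by
    linear_combination (c * d) * hsum - d * s * hcs
  have esd : s * s * (s * d) + s * d * (d * d) = s * d := by
    linear_combination (s * d) * hsum - d * c * hcs
  have edc : c * d * (c * c) + d * d * (c * d) = c * d := by
    linear_combination (c * d) * hsum - d * s * hcs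
  have eds : s * d * (s * s) + d * d * (s * d) = s * d := by
    linear_combination (s * d) * hsum - d * c * hcs
  have edd : c * d * (c * d) + s * d * (s * d) + d * d * (d * d) = d * d := by
    linear_combination (d * d) * hsum
  have z1 : c * c * (s * s) = 0 := by linear_combination (c * s) * hcs
  have z2 : s * s * (c * c) = 0 := by linear_combination (c * s) * hcs
  have z3 : c * c * (s * d) = 0 := by linear_combination (c * d) * hcs
  have z4 : s * s * (c * d) = 0 := by linear_combination (s * d) * hcs
  have z5 : c * d * (s * d) = 0 := by linear_combination (d * d) * hcs
  have z6 : s * d * (c * d) = 0 := by linear_combination (d * d) * hcs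
  have z7 : c * d * (s * s) = 0 := by linear_combination (s * d) * hcs
  have z8 : s * d * (c * c) = 0 := by linear_combination (c * d) * hcs
  let R : susp A → Matrix (Fin 2) (Fin 2) E := fun x =>
    !![ν₀ (hsmul (c * c) x) + ν₁ (hsmul (s * s) x),
       ν₀ (hsmul (c * d) x) + v * ν₀ (hsmul (s * d) x);
       ν₀ (hsmul (c * d) x) + ν₀ (hsmul (s * d) x) * star v,
       ν₀ (hsmul (d * d) x)]
  have Rmul : ∀ x y, R (x * y) = R x * R y := by
    intro x y
    simp only [R, Matrix.mul_fin_two]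
    have e00 : ν₀ (hsmul (c * c) (x * y)) + ν₁ (hsmul (s * s) (x * y)) =
        (ν₀ (hsmul (c * c) x) + ν₁ (hsmul (s * s) x)) *
          (ν₀ (hsmul (c * c) y) + ν₁ (hsmul (s * s) y)) +
        (ν₀ (hsmul (c * d) x) + v * ν₀ (hsmul (s * d) x)) *
          (ν₀ (hsmul (c * d) y) + ν₀ (hsmul (s * d) y) * star v) := by
      have t1 : ν₀ (hsmul (c * d) x) * (ν₀ (hsmul (s * d) y) * star v) = 0 := by
        rw [← mul_assoc, p0, z5, hsmul_zero_left, map_zero, zero_mul]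
      have t2 : v * ν₀ (hsmul (s * d) x) * ν₀ (hsmul (c * d) y) = 0 := by
        rw [mul_assoc, p0, z6, hsmul_zero_left, map_zero, mul_zero]
      have t3 : v * ν₀ (hsmul (s * d) x) * (ν₀ (hsmul (s * d) y) * star v)
          = ν₁ (hsmul (s * d * (s * d)) (x * y)) := by
        rw [m1, m2, mul_assoc, ← mul_assoc v, hvv', one_mul, p1]
      rw [add_mul, mul_add, mul_add, add_mul, mul_add, mul_add, t1, t2, t3, p0, p1, p0,
        x01 _ _ _ _ z1, x10 _ _ _ _ z2]
      conv_lhs => rw [← ec, ← es]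
      rw [hsmul_add_left, hsmul_add_left, map_add, map_add]
      abel
    have e01 : ν₀ (hsmul (c * d) (x * y)) + v * ν₀ (hsmul (s * d) (x * y)) =
        (ν₀ (hsmul (c * c) x) + ν₁ (hsmul (s * s) x)) *
          (ν₀ (hsmul (c * d) y) + v * ν₀ (hsmul (s * d) y)) +
        (ν₀ (hsmul (c * d) x) + v * ν₀ (hsmul (s * d) x)) * ν₀ (hsmul (d * d) y) := by
      have t1 : ν₀ (hsmul (c * c) x) * (v * ν₀ (hsmul (s * d) y)) = 0 := by
        rw [m1, ← mul_assoc, x01 _ _ _ _ z3, zero_mul]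
      have t2 : ν₁ (hsmul (s * s) x) * (v * ν₀ (hsmul (s * d) y))
          = v * ν₀ (hsmul (s * s * (s * d)) (x * y)) := by
        rw [m1, ← mul_assoc, p1, ← mul_assoc (s * s) s d, m1]
      rw [add_mul, mul_add, mul_add, add_mul, t1, t2, mul_assoc v, p0, p0, p0,
        x10 _ _ _ _ z4]
      conv_lhs => rw [← ecd, ← esd]
      rw [hsmul_add_left, hsmul_add_left, map_add, map_add, mul_add]
      abel
    have e10 : ν₀ (hsmul (c * d) (x * y)) + ν₀ (hsmul (s * d) (x * y)) * star v =
        (ν₀ (hsmul (c * d) x) + ν₀ (hsmul (s * d) x) * star v) *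
          (ν₀ (hsmul (c * c) y) + ν₁ (hsmul (s * s) y)) +
        ν₀ (hsmul (d * d) x) * (ν₀ (hsmul (c * d) y) + ν₀ (hsmul (s * d) y) * star v) := by
      have t1 : ν₀ (hsmul (s * d) x) * star v * ν₀ (hsmul (c * c) y) = 0 := by
        rw [m2, mul_assoc, x10 _ _ _ _ z8, mul_zero]
      have t2 : ν₀ (hsmul (s * d) x) * star v * ν₁ (hsmul (s * s) y)
          = ν₀ (hsmul (s * d * (s * s)) (x * y)) * star v := by
        have e : s * d * (s * s) = s * s * s * d := by ring
        rw [m2, mul_assoc, p1, e, m2]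
      rw [add_mul, mul_add, mul_add, mul_add, t1, t2, ← mul_assoc (ν₀ _) (ν₀ _) (star v),
        p0, p0, p0, x01 _ _ _ _ z7]
      conv_lhs => rw [← edc, ← eds]
      rw [hsmul_add_left, hsmul_add_left, map_add, map_add, add_mul]
      abel
    have e11 : ν₀ (hsmul (d * d) (x * y)) =
        (ν₀ (hsmul (c * d) x) + ν₀ (hsmul (s * d) x) * star v) *
          (ν₀ (hsmul (c * d) y) + v * ν₀ (hsmul (s * d) y)) +
        ν₀ (hsmul (d * d) x) * ν₀ (hsmul (d * d) y) := by
      have t1 : ν₀ (hsmul (s * d) x) * star v * ν₀ (hsmul (c * d) y) = 0 := by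
        rw [m2, mul_assoc, x10 _ _ _ _ z6, mul_zero]
      have t2 : ν₀ (hsmul (c * d) x) * (v * ν₀ (hsmul (s * d) y)) = 0 := by
        rw [m1, ← mul_assoc, x01 _ _ _ _ z5, zero_mul]
      have t3 : ν₀ (hsmul (s * d) x) * star v * (v * ν₀ (hsmul (s * d) y))
          = ν₀ (hsmul (s * d * (s * d)) (x * y)) := by
        rw [mul_assoc, ← mul_assoc (star v), hvv, one_mul, p0]
      rw [add_mul, mul_add, mul_add, t1, t2, t3, p0, p0]
      conv_lhs => rw [← edd]
      rw [hsmul_add_left, hsmul_add_left, map_add, map_add]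
      abel
    rw [← e00, ← e01, ← e10, ← e11]
  have Rstar : ∀ x, R (star x) = star (R x) := by
    intro x
    simp only [R, sc _ _ scc, sc _ _ sss, sc _ _ sdd, sc _ _ scd, sc _ _ ssd, map_star]
    ext i j
    fin_cases i <;> fin_cases j <;>
      simp [Matrix.star_apply, star_add, star_mul]
  let ρ : susp A →⋆ₙₐ[ℂ] Matrix (Fin 2) (Fin 2) E :=
    { toFun := R
      map_smul' := by
        intro z x
        simp only [R, hsmul_smul_right, map_smul]
        ext i j
        fin_cases i <;> fin_cases j <;> simp
      map_zero' := by
        simp only [R, hsmul_zero_right, map_zero]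
        ext i j
        fin_cases i <;> fin_cases j <;> simp
      map_add' := by
        intro x y
        simp only [R, hsmul_add_right, map_add]
        ext i j
        fin_cases i <;> fin_cases j <;> simp [mul_add, add_mul] <;> abel
      map_mul' := Rmul
      map_star' := Rstar }
  refine ⟨ρ, ?_, ?_, ?_, ?_⟩
  · intro x hx
    have key : ∀ (h k : C(I, ℂ)), (∀ t : I, (t : ℝ) ≤ 1/3 → h t = k t) →
        hsmul h x = hsmul k x := by
      intro h k e
      apply susp_ext
      intro t
      rw [hsmul_apply', hsmul_apply']
      by_cases ht : (t : ℝ) ≤ 1/3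
      · rw [e t ht]
      · rw [hx t (fun h' => ht h'.2.le)]; simp
    have k1 : hsmul (c * c) x = x := by
      rw [key (c * c) 1 (fun t ht => by simp [hL t ht]), hsmul_one_left]
    have k2 : hsmul (s * s) x = 0 := by
      rw [key (s * s) 0 (fun t ht => by simp [hL t ht]), hsmul_zero_left]
    have k3 : hsmul (c * d) x = 0 := by
      rw [key (c * d) 0 (fun t ht => by simp [hL t ht]), hsmul_zero_left]
    have k4 : hsmul (s * d) x = 0 := by
      rw [key (s * d) 0 (fun t ht => by simp [hL t ht]), hsmul_zero_left]
    have k5 : hsmul (d * d) x = 0 := by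
      rw [key (d * d) 0 (fun t ht => by simp [hL t ht]), hsmul_zero_left]
    change R x = _
    simp only [R, k1, k2, k3, k4, k5, map_zero, mul_zero, zero_mul, add_zero]
  · intro x hx
    have key : ∀ (h k : C(I, ℂ)), (∀ t : I, 2/3 ≤ (t : ℝ) → h t = k t) →
        hsmul h x = hsmul k x := by
      intro h k e
      apply susp_ext
      intro t
      rw [hsmul_apply', hsmul_apply']
      by_cases ht : 2/3 ≤ (t : ℝ)
      · rw [e t ht]
      · rw [hx t (fun h' => ht h'.1.le)]; simp
    have k1 : hsmul (c * c) x = 0 := by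
      rw [key (c * c) 0 (fun t ht => by simp [hR t ht]), hsmul_zero_left]
    have k2 : hsmul (s * s) x = x := by
      rw [key (s * s) 1 (fun t ht => by simp [hR t ht]), hsmul_one_left]
    have k3 : hsmul (c * d) x = 0 := by
      rw [key (c * d) 0 (fun t ht => by simp [hR t ht]), hsmul_zero_left]
    have k4 : hsmul (s * d) x = 0 := by
      rw [key (s * d) 0 (fun t ht => by simp [hR t ht]), hsmul_zero_left]
    have k5 : hsmul (d * d) x = 0 := by
      rw [key (d * d) 0 (fun t ht => by simp [hR t ht]), hsmul_zero_left]
    change R x = _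
    simp only [R, k1, k2, k3, k4, k5, map_zero, mul_zero, zero_mul, add_zero, zero_add]
  · intro τ _ hτ x
    change τ (ν₀ (hsmul (c * c) x) + ν₁ (hsmul (s * s) x)) + τ (ν₀ (hsmul (d * d) x)) = _
    rw [map_add, ← hτ, ← map_add, ← map_add, ← map_add, ← map_add, ← hsmul_add_left,
      ← hsmul_add_left, hsum, hsmul_one_left]
  · intro h x
    have a0 : ∀ k, θ h * ν₀ (hsmul k x) = ν₀ (hsmul k (hsmul h x)) := by
      intro k
      rw [← (hν₀ _ _).1, hsmul_hsmul, hsmul_hsmul, mul_comm]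
    have b0 : ∀ k, ν₀ (hsmul k x) * θ h = ν₀ (hsmul k (hsmul h x)) := by
      intro k
      rw [← (hν₀ _ _).2, hsmul_hsmul, hsmul_hsmul, mul_comm]
    have a1 : ∀ k, θ h * ν₁ (hsmul k x) = ν₁ (hsmul k (hsmul h x)) := by
      intro k
      rw [← (hν₁ _ _).1, hsmul_hsmul, hsmul_hsmul, mul_comm]
    have b1 : ∀ k, ν₁ (hsmul k x) * θ h = ν₁ (hsmul k (hsmul h x)) := by
      intro k
      rw [← (hν₁ _ _).2, hsmul_hsmul, hsmul_hsmul, mul_comm]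
    have a2 : θ h * (v * ν₀ (hsmul (s * d) x)) = v * ν₀ (hsmul (s * d) (hsmul h x)) := by
      rw [m1, m1, ← mul_assoc, a1]
    have b2 : ν₀ (hsmul (s * d) x) * star v * θ h
        = ν₀ (hsmul (s * d) (hsmul h x)) * star v := by
      rw [m2, m2, mul_assoc, b1]
    constructor
    · change R _ = _ * R x
      ext i j
      rw [Matrix.diagonal_mul]
      fin_cases i <;> fin_cases j <;>
        simp [R, mul_add, a0, a1, a2, ← mul_assoc (θ h) (ν₀ _) (star v)]
    · change R _ = R x * _
      ext i j
      rw [Matrix.mul_diagonal]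
      fin_cases i <;> fin_cases j <;>
        simp [R, add_mul, b0, b1, b2, mul_assoc v (ν₀ _) (θ h)]
end
end

section
/- Let A be a unital C*-algebra with stable rank one and strict comparison of positive elements with respect to bounded traces. Suppose a₁, a₂ ∈ A are positive contractions such that for every tracial state τ on A and every nonzero continuous function h : [0,1] → [0,∞) with h(0) = 0 one has τ(h(a₁)) = τ(h(a₂)) > 0. Then a₁ and a₂ are approximately unitarily equivalent: for every ε > 0 there is a unitary u ∈ A with ‖u a₁ u* − a₂‖ ≤ ε. -/
open scoped ComplexOrder ENNReal

set_option synthInstance.maxHeartbeats 1000000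
set_option maxHeartbeats 1000000

noncomputable section

/-- `a` is Cuntz below `b` (in a matrix algebra over a C*-algebra):
`a = lim xₙ b xₙ*`, with respect to the C*-norm. -/
def CuntzBelowIn {B : Type} [Ring B] [StarRing B] [Algebra ℂ B] (a b : B) : Prop :=
  ∃ x : ℕ → B,
    Filter.Tendsto (fun n => cstarNorm (a - x n * b * star (x n))) Filter.atTop (nhds 0)

/-- `L = d_{τ⊗Trₖ}(a) = limₙ (τ⊗Trₖ)(a^{1/n})`, encoded via a sequence of positive `n`-th
roots of `a` (which are unique when they exist, so this determines `L`). -/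
def IsDLimit {A : Type} [CStarAlgebra A] {k : ℕ} (τ : A →L[ℂ] ℂ)
    (a : Matrix (Fin k) (Fin k) A) (L : ℝ) : Prop :=
  ∃ r : ℕ → Matrix (Fin k) (Fin k) A,
    (∀ n, (∃ y : Matrix (Fin k) (Fin k) A, r n = star y * y) ∧ r n ^ (n + 1) = a) ∧
    Filter.Tendsto (fun n => ∑ i, τ (r n i i)) Filter.atTop (nhds (L : ℂ))

/-- Strict comparison of positive elements with respect to bounded traces: for positive
matrices `a, b` over `A`, if `d_{τ⊗Trₖ}(a) < d_{τ⊗Trₖ}(b)` for every tracial state `τ`,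
then `a` is Cuntz below `b`. -/
def StrictComparison (A : Type) [CStarAlgebra A] : Prop :=
  ∀ (k : ℕ) (a b : Matrix (Fin k) (Fin k) A),
    (∃ y : Matrix (Fin k) (Fin k) A, a = star y * y) →
    (∃ y : Matrix (Fin k) (Fin k) A, b = star y * y) →
    (∀ (τ : A →L[ℂ] ℂ), IsTracialState τ → ∀ (La Lb : ℝ),
      IsDLimit τ a La → IsDLimit τ b Lb → La < Lb) →
    CuntzBelowIn a b


/-- Consequence of stable rank one: polar parts are approximated by unitaries. -/
theorem exists_unitary_approx {A : Type} [CStarAlgebra A] [PartialOrder A] [StarOrderedRing A]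
    (hsr : Dense {x : A | IsUnit x}) (z : A) {ε : ℝ} (hε : 0 < ε) :
    ∃ u ∈ unitary A, ∀ m : A, ‖u * m - z * m‖ ≤ ‖star z * z * m - m‖ + ε * ‖m‖ := by
  have hcont : Continuous fun y : A => ‖star y * y - star z * z‖ + ‖y - z‖ := by fun_prop
  have hopen : IsOpen {y : A | ‖star y * y - star z * z‖ + ‖y - z‖ < ε} :=
    isOpen_lt hcont continuous_const
  obtain ⟨y, hy1, hy2⟩ := hsr.inter_open_nonempty _ hopen ⟨z, by simpa using hε⟩
  simp only [Set.mem_ofPred_eq] at hy1 hy2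
  set p := CFC.sqrt (star y * y) with hp
  have hyy : 0 ≤ star y * y := star_mul_self_nonneg y
  have hpp : p * p = star y * y := CFC.sqrt_mul_sqrt_self _ hyy
  have hp0 : 0 ≤ p := CFC.sqrt_nonneg _
  have hpu : IsUnit p := by
    have h1 : IsUnit (p * p) := by rw [hpp]; exact hy2.star.mul hy2
    have hc : Commute p p := Commute.refl p
    exact (hc.isUnit_mul_iff.1 h1).1
  obtain ⟨P, hP⟩ := hpu
  have hPs : star (↑P⁻¹ : A) = ↑P⁻¹ := by
    have : star P = P := Units.ext (by simpa [hP] using (IsSelfAdjoint.of_nonneg hp0).star_eq)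
    rw [← Units.coe_star, star_inv, this]
  have hu : y * ↑P⁻¹ ∈ unitary A := by
    have h1 : star (y * ↑P⁻¹) * (y * ↑P⁻¹) = 1 := by
      rw [star_mul, hPs]
      calc (↑P⁻¹ : A) * star y * (y * ↑P⁻¹) = ↑P⁻¹ * (star y * y) * ↑P⁻¹ := by noncomm_ring
        _ = 1 := by rw [← hpp, ← hP]; simp [mul_assoc]
    have hun : IsUnit (y * (↑P⁻¹ : A)) := hy2.mul (Units.isUnit _)
    refine Unitary.mem_iff.2 ⟨h1, ?_⟩
    obtain ⟨V, hV⟩ := hun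
    rw [← hV] at h1 ⊢
    have : star (V : A) = ↑V⁻¹ := by
      exact Units.eq_inv_of_mul_eq_one_right h1
    rw [this]; simp
  refine ⟨_, hu, fun m => ?_⟩
  have key : ‖m - p * m‖ ≤ ‖m - star y * y * m‖ := by
    have h1 : m - star y * y * m = (1 + p) * (m - p * m) := by rw [← hpp]; noncomm_ring
    rw [h1]
    have hsa : star p = p := (IsSelfAdjoint.of_nonneg hp0).star_eq
    have h2 : star (m - p * m) * 1 * (m - p * m) ≤
        star (m - p * m) * (1 + (p + p + p * p)) * (m - p * m) := by
      apply star_left_conjugate_le_conjugate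
      have : 0 ≤ p + p + p * p := by
        rw [hpp]; exact add_nonneg (add_nonneg hp0 hp0) hyy
      exact le_add_of_nonneg_right this
    have h3 : star (m - p * m) * (1 + (p + p + p * p)) * (m - p * m)
        = star ((1 + p) * (m - p * m)) * ((1 + p) * (m - p * m)) := by
      rw [star_mul, star_add, hsa, star_one]; noncomm_ring
    rw [h3, mul_one] at h2
    have h4 := CStarAlgebra.norm_le_norm_of_nonneg_of_le (star_mul_self_nonneg _) h2
    rw [CStarRing.norm_star_mul_self, CStarRing.norm_star_mul_self] at h4
    nlinarith [norm_nonneg (m - p * m), norm_nonneg ((1 + p) * (m - p * m))]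
  have e1 : y * ↑P⁻¹ * m - z * m = (y * ↑P⁻¹) * (m - p * m) + (y - z) * m := by
    have : y * ↑P⁻¹ * (p * m) = y * m := by rw [← hP]; simp [mul_assoc]
    rw [mul_sub, this]; noncomm_ring
  have e2 : ‖(y * ↑P⁻¹) * (m - p * m)‖ = ‖m - p * m‖ :=
    CStarRing.norm_mem_unitary_mul _ hu
  have e3 : m - star y * y * m = -(star z * z * m - m) - (star y * y - star z * z) * m := by
    noncomm_ring
  calc ‖y * ↑P⁻¹ * m - z * m‖ ≤ ‖m - p * m‖ + ‖(y - z) * m‖ := by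
        rw [e1, ← e2]; exact norm_add_le _ _
    _ ≤ ‖m - star y * y * m‖ + ‖y - z‖ * ‖m‖ := add_le_add key (norm_mul_le _ _)
    _ ≤ (‖star z * z * m - m‖ + ‖star y * y - star z * z‖ * ‖m‖) + ‖y - z‖ * ‖m‖ := by
        rw [e3]
        gcongr
        refine (norm_sub_le _ _).trans ?_
        rw [norm_neg]
        gcongr
        exact norm_mul_le _ _
    _ = ‖star z * z * m - m‖ + (‖star y * y - star z * z‖ + ‖y - z‖) * ‖m‖ := by ring
    _ ≤ _ := by gcongr

/-- norm of a unitary is at most one -/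
theorem norm_unitary_le {A : Type} [CStarAlgebra A] {u : A} (hu : u ∈ unitary A) : ‖u‖ ≤ 1 := by
  simpa using (CStarRing.norm_mem_unitary_mul (1 : A) hu).le.trans (by
    rcases subsingleton_or_nontrivial A with h | h
    · rw [Subsingleton.elim (1 : A) 0]; simp
    · simp)

theorem mul_norm_le_of {A : Type} [CStarAlgebra A] {a b : A} {r s : ℝ}
    (ha : ‖a‖ ≤ r) (hb : ‖b‖ ≤ s) : ‖a * b‖ ≤ r * s :=
  (norm_mul_le _ _).trans (mul_le_mul ha hb (norm_nonneg _) ((norm_nonneg _).trans ha))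

theorem add_norm_le_of {A : Type} [CStarAlgebra A] {a b : A} {r s : ℝ}
    (ha : ‖a‖ ≤ r) (hb : ‖b‖ ≤ s) : ‖a + b‖ ≤ r + s :=
  (norm_add_le _ _).trans (add_le_add ha hb)

theorem sub_norm_le_of {A : Type} [CStarAlgebra A] {a b : A} {r s : ℝ}
    (ha : ‖a‖ ≤ r) (hb : ‖b‖ ≤ s) : ‖a - b‖ ≤ r + s :=
  (norm_sub_le _ _).trans (add_le_add ha hb)

theorem conj_approx {A : Type} [CStarAlgebra A] {u v e : A} {η : ℝ}
    (hu : u ∈ unitary A) (hv : v ∈ unitary A) (he : star e = e) (h : ‖v * e - u * e‖ ≤ η) :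
    ‖v * e * star v - u * e * star u‖ ≤ 2 * η := by
  have h' : ‖e * star v - e * star u‖ ≤ η := by
    have : e * star v - e * star u = star (v * e - u * e) := by simp [he]
    rw [this, norm_star]; exact h
  have hsv : ‖star v‖ ≤ 1 := by rw [norm_star]; exact norm_unitary_le hv
  have e1 : v * e * star v - u * e * star u
      = (v * e - u * e) * star v + u * (e * star v - e * star u) := by noncomm_ring
  rw [e1]
  have := add_norm_le_of (mul_norm_le_of h hsv) (mul_norm_le_of (norm_unitary_le hu) h')
  linarith

theorem step_lemma {A : Type} [CStarAlgebra A] [PartialOrder A] [StarOrderedRing A]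
    (hsr : Dense {x : A | IsUnit x}) {δ : ℝ} (hδ : 0 < δ)
    {p0 p c k Q5 Q6 z : A}
    (hp1 : ‖p‖ ≤ 1) (hk : star k = k) (hk1 : ‖k‖ ≤ 1)
    (h5 : star Q5 = Q5) (h51 : ‖1 - Q5‖ ≤ 1) (h6 : star Q6 = Q6) (h61 : ‖1 - Q6‖ ≤ 1)
    (hcp : c * p = p) (hpp0 : p * p0 = p0) (hp0k : ‖p0 * k - k‖ ≤ δ)
    (hcz : ‖c - star z * z‖ ≤ δ) (h5z : Q5 * z = z) (h5k : Q5 * k = k) (hk5 : k * Q5 = k)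
    (h65 : Q6 * Q5 = Q5) (h56 : Q5 * Q6 = Q5) :
    ∃ w ∈ unitary A, ∃ v ∈ unitary A,
      ‖(v * Q6 * star v) * (w * p * star w) - w * p * star w‖ ≤ 20 * δ ∧
      ∀ e, star e = e → ‖e‖ ≤ 1 → k * e = e → ‖v * e * star v - w * e * star w‖ ≤ 20 * δ := by
  obtain ⟨w, hw, hwm⟩ := exists_unitary_approx hsr z hδ
  have hw1 := norm_unitary_le hw
  have hsw1 : ‖star w‖ ≤ 1 := by rw [norm_star]; exact hw1
  have a1 : ‖w * p - z * p‖ ≤ 2 * δ := by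
    have e1 : star z * z * p - p = -((c - star z * z) * p) := by rw [sub_mul, hcp]; noncomm_ring
    have := hwm p
    rw [e1, norm_neg] at this
    have h2 := mul_norm_le_of hcz hp1
    nlinarith [norm_nonneg p]
  have a2 : ‖(1 - Q5) * (w * p)‖ ≤ 2 * δ := by
    have e1 : (1 - Q5) * (w * p) = (1 - Q5) * (w * p - z * p) := by
      have : (1 - Q5) * (z * p) = 0 := by
        rw [← mul_assoc, sub_mul, h5z]; simp
      rw [mul_sub, this, sub_zero]
    rw [e1]; have := mul_norm_le_of h51 a1; linarith
  have a3 : ‖(1 - Q5) * (w * k)‖ ≤ 4 * δ := by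
    have e1 : (1 - Q5) * (w * k) = (1 - Q5) * (w * p) * k
        - (1 - Q5) * w * ((p0 * k - k) - p * (p0 * k - k)) := by
      have : p * (p0 * k) = p0 * k := by rw [← mul_assoc, hpp0]
      rw [mul_sub p, this]; noncomm_ring
    rw [e1]
    have := sub_norm_le_of (mul_norm_le_of a2 hk1) (mul_norm_le_of (mul_norm_le_of h51 hw1)
      (sub_norm_le_of hp0k (mul_norm_le_of hp1 hp0k)))
    linarith
  have hsa : ‖(k * star w) * (1 - Q5)‖ ≤ 4 * δ := by
    have : (k * star w) * (1 - Q5) = star ((1 - Q5) * (w * k)) := by simp [hk, h5]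
    rw [this, norm_star]; exact a3
  obtain ⟨v, hv, hvm⟩ := exists_unitary_approx hsr (w * k + (1 - Q5)) hδ
  have hww : star w * w = 1 := (Unitary.mem_iff.1 hw).1
  have b1 : star (w * k + (1 - Q5)) * (w * k + (1 - Q5)) = (k * k + (1 - Q5) * (1 - Q5))
      + (k * star w * (1 - Q5) + (1 - Q5) * (w * k)) := by
    have : star (w * k + (1 - Q5)) = k * star w + (1 - Q5) := by simp [hk, h5]
    rw [this]
    have h2 : k * star w * (w * k) = k * k := by
      calc _ = k * (star w * w) * k := by noncomm_ring
        _ = _ := by rw [hww, mul_one]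
    rw [add_mul, mul_add, mul_add, h2]; abel
  have b2 : ∀ m, ‖m‖ ≤ 1 → (k * k + (1 - Q5) * (1 - Q5)) * m = m →
      ‖v * m - (w * k + (1 - Q5)) * m‖ ≤ 9 * δ := by
    intro m hm hmm
    have h1 := hvm m
    rw [b1, add_mul _ (k * star w * (1 - Q5) + _), hmm, add_sub_cancel_left] at h1
    have h2 := mul_norm_le_of (add_norm_le_of hsa a3) hm
    nlinarith [norm_nonneg m]
  refine ⟨w, hw, v, hv, ?_, ?_⟩
  · have kq : k * (1 - Q6) = 0 := by
      have : k * Q6 = k := by rw [← hk5, mul_assoc, h56]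
      rw [mul_sub, this, mul_one, sub_self]
    have qq : (1 - Q5) * (1 - Q6) = 1 - Q6 := by
      rw [sub_mul, one_mul, mul_sub, h56]; simp
    have c1 : ‖v * (1 - Q6) - 1 * (1 - Q6)‖ ≤ 9 * δ := by
      have := b2 (1 - Q6) h61 (by
        rw [add_mul, mul_assoc, kq, mul_assoc, qq, qq]; simp)
      rwa [add_mul, mul_assoc, kq, qq, mul_zero, zero_add, ← one_mul (1 - Q6), ← mul_assoc,
        mul_one] at this
    have c2 := conj_approx (one_mem _) hv (by simp [h6]) c1
    have hvv : v * star v = 1 := (Unitary.mem_iff.1 hv).2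
    have c3 : ‖v * Q6 * star v - Q6‖ ≤ 18 * δ := by
      have : v * Q6 * star v - Q6 = -(v * (1 - Q6) * star v - 1 * (1 - Q6) * star 1) := by
        have : v * (1 - Q6) * star v = 1 - v * Q6 * star v := by
          rw [mul_sub, sub_mul, mul_one, hvv]
        rw [this, star_one]; noncomm_ring
      rw [this, norm_neg]; linarith
    have e1 : (v * Q6 * star v) * (w * p * star w) - w * p * star w
        = (v * Q6 * star v - Q6) * (w * p * star w) - (1 - Q6) * ((1 - Q5) * (w * p)) * star w := by
      have qq' : (1 - Q6) * (1 - Q5) = 1 - Q6 := by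
        rw [sub_mul, one_mul, mul_sub, h65]; simp
      rw [← mul_assoc (1 - Q6), qq']; noncomm_ring
    rw [e1]
    have := sub_norm_le_of (mul_norm_le_of c3 (mul_norm_le_of (mul_norm_le_of hw1 hp1) hsw1))
      (mul_norm_le_of (mul_norm_le_of h61 a2) hsw1)
    linarith
  · intro e he he1 hke
    have q0 : (1 - Q5) * e = 0 := by
      rw [← hke, ← mul_assoc, sub_mul, h5k]; simp
    have c1 := b2 e he1 (by rw [add_mul, mul_assoc, hke, hke, mul_assoc, q0]; simp)
    rw [add_mul, q0, mul_assoc, hke, add_zero] at c1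
    have := conj_approx hw hv he c1
    linarith

/-- conjugation -/
def cj {A : Type} [CStarAlgebra A] (u x : A) : A := u * x * star u

theorem cj_mul {A : Type} [CStarAlgebra A] {u : A} (hu : u ∈ unitary A) (x y : A) :
    cj u x * cj u y = cj u (x * y) := by
  have h : star u * u = 1 := (Unitary.mem_iff.1 hu).1
  unfold cj
  calc _ = u * x * (star u * u) * y * star u := by noncomm_ring
    _ = _ := by rw [h]; noncomm_ring

theorem cj_cj {A : Type} [CStarAlgebra A] (w u x : A) : cj (w * u) x = cj w (cj u x) := by
  unfold cj; rw [star_mul]; noncomm_ring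

theorem cj_sub {A : Type} [CStarAlgebra A] (u x y : A) : cj u (x - y) = cj u x - cj u y := by
  unfold cj; noncomm_ring

theorem cj_norm {A : Type} [CStarAlgebra A] {u : A} (hu : u ∈ unitary A) (x : A) :
    ‖cj u x‖ = ‖x‖ := by
  unfold cj
  rw [CStarRing.norm_mul_mem_unitary _ (Unitary.star_mem hu), CStarRing.norm_mem_unitary_mul _ hu]

theorem cj_one {A : Type} [CStarAlgebra A] {u : A} (hu : u ∈ unitary A) : cj u 1 = 1 := by
  unfold cj; rw [mul_one]; exact (Unitary.mem_iff.1 hu).2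

theorem cj_star {A : Type} [CStarAlgebra A] (u x : A) : star (cj u x) = cj u (star x) := by
  unfold cj; simp [mul_assoc]

/-- Abstract ladder data. -/
structure Ladder {A : Type} [CStarAlgebra A] (X : ZMod 2 → ℕ → A) : Prop where
  sa : ∀ x i, star (X x i) = X x i
  n1 : ∀ x i, ‖X x i‖ ≤ 1
  n1' : ∀ x i, ‖1 - X x i‖ ≤ 1
  ml : ∀ x i i', i < i' → X x i' * X x i = X x i
  cmp : ∀ x i, ∀ η > 0, ∃ z, ‖X x i - star z * z‖ ≤ η ∧ X (x + 1) (i + 3) * z = z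

theorem Ladder.mr {A : Type} [CStarAlgebra A] {X : ZMod 2 → ℕ → A} (h : Ladder X)
    (x : ZMod 2) (i i' : ℕ) (hi : i < i') : X x i * X x i' = X x i := by
  have := congrArg star (h.ml x i i' hi)
  rwa [star_mul, h.sa, h.sa] at this

theorem Ladder.conj {A : Type} [CStarAlgebra A] {X : ZMod 2 → ℕ → A} (h : Ladder X)
    {U : ZMod 2 → A} (hU : ∀ x, U x ∈ unitary A) : Ladder fun x i => cj (U x) (X x i) where
  sa x i := by rw [cj_star, h.sa]
  n1 x i := by rw [cj_norm (hU x)]; exact h.n1 x i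
  n1' x i := by
    rw [← cj_one (hU x), ← cj_sub, cj_norm (hU x)]; exact h.n1' x i
  ml x i i' hi := by rw [cj_mul (hU x), h.ml x i i' hi]
  cmp x i η hη := by
    obtain ⟨z, h1, h2⟩ := h.cmp x i η hη
    have h3 : star (U (x + 1)) * U (x + 1) = 1 := (Unitary.mem_iff.1 (hU _)).1
    refine ⟨U (x + 1) * z * star (U x), ?_, ?_⟩
    · have : star (U (x + 1) * z * star (U x)) * (U (x + 1) * z * star (U x))
          = cj (U x) (star z * z) := by
        simp only [star_mul, star_star, cj]
        calc _ = U x * star z * (star (U (x + 1)) * U (x + 1)) * z * star (U x) := by noncomm_ring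
          _ = _ := by rw [h3]; noncomm_ring
      rw [this, ← cj_sub, cj_norm (hU x)]; exact h1
    · unfold cj
      calc _ = U (x + 1) * X (x + 1) (i + 3) * (star (U (x + 1)) * U (x + 1)) * z * star (U x) := by
            noncomm_ring
        _ = U (x + 1) * (X (x + 1) (i + 3) * z) * star (U x) := by rw [h3]; noncomm_ring
        _ = _ := by rw [h2]

theorem chain_lemma {A : Type} [CStarAlgebra A] [PartialOrder A] [StarOrderedRing A]
    (hsr : Dense {x : A | IsUnit x}) {X : ZMod 2 → ℕ → A} (hX : Ladder X) (m : ℕ) :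
    ∀ δ : ℝ, 0 < δ → ∃ U : ZMod 2 → A, (∀ x, U x ∈ unitary A) ∧
      ∃ Y : ZMod 2 → ℕ → A, (Y = fun x i => cj (U x) (X x i)) ∧
      (∀ j : ℕ, j + 1 < m → ‖Y (j + 1) (6 * (j + 1)) * Y j (6 * j) - Y j (6 * j)‖ ≤ δ) ∧
      (∀ j : ℕ, j + 1 = m →
        ‖Y (j + 1) (6 * (j + 1)) * Y j (6 * j + 1) - Y j (6 * j + 1)‖ ≤ δ) := by
  induction m with
  | zero =>
    intro δ hδ
    exact ⟨fun _ => 1, fun _ => one_mem _, _, rfl, fun j hj => absurd hj (by omega),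
      fun j hj => absurd hj (by omega)⟩
  | succ m ih =>
    intro δ' hδ'
    obtain ⟨δ, hδ, hδδ⟩ : ∃ δ : ℝ, 0 < δ ∧ 100 * δ = δ' := ⟨δ' / 100, by positivity, by ring⟩
    obtain ⟨U, hU, Y, hYU, h1, h2⟩ := ih δ hδ
    have hY : Ladder Y := by rw [hYU]; exact hX.conj hU
    have two : ∀ x : ZMod 2, x + 1 + 1 = x := by decide
    -- combined relation
    have hrel : ∀ j : ℕ, j + 1 ≤ m →
        ‖Y (j + 1) (6 * (j + 1)) * Y j (6 * j) - Y j (6 * j)‖ ≤ δ := by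
      intro j hj
      rcases hj.lt_or_eq with h | h
      · exact h1 j h
      · have h3 := mul_norm_le_of (h2 j h) (hY.n1 j (6 * j))
        rw [sub_mul, mul_assoc, hY.ml _ _ _ (Nat.lt_succ_self _), mul_one] at h3
        exact h3
    obtain ⟨k, hk, hk1, h5k, hk5, hp0k, hke⟩ : ∃ k : A, star k = k ∧ ‖k‖ ≤ 1 ∧
        Y (m + 1) (6 * m + 5) * k = k ∧ k * Y (m + 1) (6 * m + 5) = k ∧
        ‖Y m (6 * m) * k - k‖ ≤ δ ∧
        ∀ j : ℕ, j < m → k * Y (m + 1) (6 * j) = Y (m + 1) (6 * j) := by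
      rcases m with _ | n
      · exact ⟨0, by simp, by simp, by simp, by simp, by simpa using hδ.le,
          fun j hj => absurd hj (by omega)⟩
      · have e : (((n + 1 : ℕ) : ZMod 2) + 1) = n := by push_cast; exact two _
        rw [e]
        refine ⟨Y n (6 * n + 1), hY.sa _ _, hY.n1 _ _, hY.ml _ _ _ (by omega),
          hY.mr _ _ _ (by omega), ?_, fun j hj => hY.ml _ _ _ (by omega)⟩
        have := h2 n rfl
        push_cast
        exact this
    obtain ⟨z, hz1, hz2⟩ := hY.cmp m (6 * m + 2) δ hδ
    obtain ⟨w, hw, v, hv, g1, g2⟩ := step_lemma hsr hδ (p0 := Y m (6 * m)) (p := Y m (6 * m + 1))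
      (c := Y m (6 * m + 2)) (k := k) (Q5 := Y (m + 1) (6 * m + 5)) (Q6 := Y (m + 1) (6 * m + 6))
      (z := z) (hY.n1 _ _) hk hk1 (hY.sa _ _) (hY.n1' _ _) (hY.sa _ _) (hY.n1' _ _)
      (hY.ml _ _ _ (by omega)) (hY.ml _ _ _ (by omega)) hp0k hz1 hz2 h5k hk5
      (hY.ml _ _ _ (by omega)) (hY.mr _ _ _ (by omega))
    have hne : ∀ x : ZMod 2, x + 1 ≠ x := by decide
    have hcases : ∀ x y : ZMod 2, x = y ∨ x = y + 1 := by decide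
    set W : ZMod 2 → A := fun x => if x = m then w else v with hWdef
    have hW : ∀ x, W x ∈ unitary A := by
      intro x; simp only [hWdef]; split_ifs <;> assumption
    have hWm : W m = w := by simp [hWdef]
    have hWm1 : W (m + 1) = v := by simp [hWdef]
    have hY' : Ladder fun x i => cj (W x) (Y x i) := hY.conj hW
    have hT : ∀ j : ℕ, j ≤ m → ‖cj (W j) (Y j (6 * j)) - cj w (Y j (6 * j))‖ ≤ 20 * δ := by
      intro j hj
      rcases hcases j m with h | h
      · rw [h, hWm, sub_self, norm_zero]; positivity
      · have hjm : j < m := by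
          refine lt_of_le_of_ne hj ?_
          rintro rfl
          exact hne _ h.symm
        rw [h, hWm1]
        exact g2 _ (hY.sa _ _) (hY.n1 _ _) (hke j hjm)
    refine ⟨fun x => W x * U x, fun x => mul_mem (hW x) (hU x), fun x i => cj (W x) (Y x i), ?_,
      ?_, ?_⟩
    · funext x i; rw [cj_cj, hYU]
    · intro j hj
      have hb := hT j (by omega)
      have ha := hT (j + 1) (by omega)
      have hr := hrel j (by omega)
      push_cast at ha
      rw [← cj_norm hw, cj_sub, ← cj_mul hw] at hr
      have na' := hY'.n1 (j + 1) (6 * (j + 1))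
      have nb' := hY'.n1 j (6 * j)
      have na : ‖cj w (Y (j + 1) (6 * (j + 1)))‖ ≤ 1 := by rw [cj_norm hw]; exact hY.n1 _ _
      simp only at na' nb' ⊢
      generalize cj (W (j + 1)) (Y (j + 1) (6 * (j + 1))) = a' at *
      generalize cj w (Y (j + 1) (6 * (j + 1))) = a at *
      generalize cj (W j) (Y j (6 * j)) = b' at *
      generalize cj w (Y j (6 * j)) = b at *
      have e : a' * b' - b' = (a' - a) * b' + a * (b' - b) + (a * b - b) - (b' - b) := by
        noncomm_ring
      rw [e]
      have := sub_norm_le_of (add_norm_le_of (add_norm_le_of (mul_norm_le_of ha nb')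
        (mul_norm_le_of na hb)) hr) hb
      linarith
    · intro j hj
      obtain rfl : j = m := by omega
      simp only [hWm, hWm1]
      have e : 6 * (j + 1) = 6 * j + 6 := by ring
      rw [e]
      exact g1.trans (by linarith)

theorem le_of_approx {A : Type} [CStarAlgebra A] [PartialOrder A] [StarOrderedRing A]
    {P Q : A} {δ : ℝ} (hP : 0 ≤ P) (hP1 : P ≤ 1) (hQ : 0 ≤ Q) (hQ1 : Q ≤ 1)
    (h : ‖Q * P - P‖ ≤ δ) : P ≤ Q + algebraMap ℝ A (2 * δ) := by
  have sQ : star Q = Q := (IsSelfAdjoint.of_nonneg hQ).star_eq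
  have sP : star P = P := (IsSelfAdjoint.of_nonneg hP).star_eq
  have nQ : ‖Q‖ ≤ 1 := (CStarAlgebra.norm_le_one_iff_of_nonneg Q hQ).2 hQ1
  have h' : ‖P * Q - P‖ ≤ δ := by
    have : P * Q - P = star (Q * P - P) := by simp [sQ, sP]
    rw [this, norm_star]; exact h
  have n1 : ‖P - Q * P * Q‖ ≤ 2 * δ := by
    have e : P - Q * P * Q = -(Q * P - P) - Q * (P * Q - P) := by noncomm_ring
    rw [e]
    have := sub_norm_le_of (by rwa [norm_neg] : ‖-(Q * P - P)‖ ≤ δ) (mul_norm_le_of nQ h')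
    linarith
  have sa : IsSelfAdjoint (P - Q * P * Q) := by
    rw [isSelfAdjoint_iff]; simp [sQ, sP, mul_assoc]
  have l1 : P - Q * P * Q ≤ algebraMap ℝ A (2 * δ) :=
    sa.le_algebraMap_norm_self.trans (algebraMap_mono A n1)
  have l2 : Q * P * Q ≤ Q * 1 * Q := conjugate_le_conjugate_of_nonneg hP1 hQ
  have l3 : Q * 1 * Q ≤ Q := by
    have := CStarAlgebra.pow_antitone hQ hQ1 (show 1 ≤ 2 by norm_num)
    simpa [pow_two] using this
  calc P = (P - Q * P * Q) + Q * P * Q := by abel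
    _ ≤ algebraMap ℝ A (2 * δ) + Q := add_le_add l1 (l2.trans l3)
    _ = _ := add_comm _ _

theorem cj_mono {A : Type} [CStarAlgebra A] [PartialOrder A] [StarOrderedRing A]
    (u : A) {x y : A} (h : x ≤ y) : cj u x ≤ cj u y :=
  star_right_conjugate_le_conjugate h u

theorem ladder_order {A : Type} [CStarAlgebra A] [PartialOrder A] [StarOrderedRing A]
    (hsr : Dense {x : A | IsUnit x}) {X : ZMod 2 → ℕ → A} (hX : Ladder X)
    (h0 : ∀ x i, 0 ≤ X x i) (h1 : ∀ x i, X x i ≤ 1) (hmono : ∀ x i i', i ≤ i' → X x i ≤ X x i')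
    (a : ZMod 2 → A) (N : ℕ) (hN : 0 < N)
    (hsum : ∀ x, (N : ℝ) • a x = ∑ i ∈ Finset.range N, X x i) {δ : ℝ} (hδ : 0 < δ) :
    ∃ U : ZMod 2 → A, (∀ x, U x ∈ unitary A) ∧ ∀ x,
      cj (U x) (a x) ≤ cj (U (x + 1)) (a (x + 1)) + algebraMap ℝ A (24 / N + 2 * δ) := by
  obtain ⟨U, hU, Y, hYU, hc, -⟩ := chain_lemma hsr hX (N + 10) δ hδ
  refine ⟨U, hU, fun x => ?_⟩
  have y0 : ∀ x i, 0 ≤ Y x i := by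
    intro x i; rw [hYU]
    have := cj_mono (U x) (h0 x i)
    simpa [cj] using this
  have y1 : ∀ x i, Y x i ≤ 1 := by
    intro x i; rw [hYU]
    have := cj_mono (U x) (h1 x i)
    rwa [cj_one (hU x)] at this
  have ym : ∀ x i i', i ≤ i' → Y x i ≤ Y x i' := by
    intro x i i' hi; rw [hYU]
    exact cj_mono (U x) (hmono x i i' hi)
  have ysum : ∀ x, (N : ℝ) • cj (U x) (a x) = ∑ i ∈ Finset.range N, Y x i := by
    intro x
    have : (N : ℝ) • cj (U x) (a x) = cj (U x) ((N : ℝ) • a x) := by simp [cj]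
    rw [this, hsum, hYU]
    simp [cj, Finset.mul_sum, Finset.sum_mul]
  have step : ∀ i, i < N → Y x i ≤ Y (x + 1) (i + 24) + algebraMap ℝ A (2 * δ) := by
    intro i hi
    have hx : ((x.val : ℕ) : ZMod 2) = x := ZMod.natCast_zmod_val x
    have hv : x.val < 2 := ZMod.val_lt x
    set j : ℕ := 2 * (i / 12 + 1) + x.val with hj
    have hjx : (j : ZMod 2) = x := by
      rw [hj]; push_cast; rw [hx]
      have : (2 : ZMod 2) = 0 := by decide
      rw [this]; simp
    have h3 := hc j (by omega)
    rw [hjx] at h3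
    have h4 := le_of_approx (y0 _ _) (y1 _ _) (y0 _ _) (y1 _ _) h3
    calc Y x i ≤ Y x (6 * j) := ym _ _ _ (by omega)
      _ ≤ _ := h4
      _ ≤ _ := add_le_add_left (ym _ _ _ (by omega)) _
  have big : (N : ℝ) • cj (U x) (a x) ≤
      (N : ℝ) • (cj (U (x + 1)) (a (x + 1)) + algebraMap ℝ A (24 / N + 2 * δ)) := by
    rw [smul_add, ysum, ysum]
    calc ∑ i ∈ Finset.range N, Y x i
        ≤ ∑ i ∈ Finset.range N, (Y (x + 1) (i + 24) + algebraMap ℝ A (2 * δ)) :=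
          Finset.sum_le_sum fun i hi => step i (Finset.mem_range.1 hi)
      _ = ∑ i ∈ Finset.range N, Y (x + 1) (24 + i) + (N : ℝ) • algebraMap ℝ A (2 * δ) := by
          rw [Finset.sum_add_distrib]; simp [add_comm, Nat.cast_smul_eq_nsmul]
      _ ≤ ∑ i ∈ Finset.range (24 + N), Y (x + 1) i + (N : ℝ) • algebraMap ℝ A (2 * δ) := by
          gcongr
          rw [Finset.sum_range_add]
          exact le_add_of_nonneg_left (Finset.sum_nonneg fun i _ => y0 _ _)
      _ = ∑ i ∈ Finset.range N, Y (x + 1) i + ∑ i ∈ Finset.range 24, Y (x + 1) (N + i)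
            + (N : ℝ) • algebraMap ℝ A (2 * δ) := by
          rw [add_comm 24 N, Finset.sum_range_add]
      _ ≤ ∑ i ∈ Finset.range N, Y (x + 1) i + ∑ i ∈ Finset.range 24, (1 : A)
            + (N : ℝ) • algebraMap ℝ A (2 * δ) := by
          gcongr
          exact y1 _ _
      _ = _ := by
          have hN' : (N : ℝ) ≠ 0 := by positivity
          rw [add_assoc, Algebra.algebraMap_eq_smul_one, Algebra.algebraMap_eq_smul_one,
            smul_smul, smul_smul, mul_add, mul_div_cancel₀ _ hN', add_smul]
          congr 2
          simp only [Finset.sum_const, Finset.card_range]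
          rw [← Nat.cast_smul_eq_nsmul ℝ]; norm_num
  have hN' : (N : ℝ) ≠ 0 := by positivity
  have := smul_le_smul_of_nonneg_left big (by positivity : (0 : ℝ) ≤ (N : ℝ)⁻¹)
  rwa [inv_smul_smul₀ hN', inv_smul_smul₀ hN'] at this

/-- Ramp functions. -/
def rampF (N i : ℕ) (t : ℝ) : ℝ := max 0 (min 1 (N * t - N + 1 + i))

theorem rampF_cont (N i : ℕ) : Continuous (rampF N i) := by unfold rampF; fun_prop

theorem rampF_nonneg (N i : ℕ) (t : ℝ) : 0 ≤ rampF N i t := le_max_left _ _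

theorem rampF_le_one (N i : ℕ) (t : ℝ) : rampF N i t ≤ 1 := by
  unfold rampF; exact max_le zero_le_one (min_le_left _ _)

theorem rampF_mono (N : ℕ) {i i' : ℕ} (h : i ≤ i') (t : ℝ) : rampF N i t ≤ rampF N i' t := by
  unfold rampF; gcongr

theorem rampF_eq_one (N : ℕ) {i i' : ℕ} (h : i < i') (t : ℝ) (ht : rampF N i t ≠ 0) :
    rampF N i' t = 1 := by
  unfold rampF at *
  have h1 : 0 < (N * t - N + 1 + i : ℝ) := by
    by_contra hc
    push Not at hc
    exact ht (max_eq_left ((min_le_right _ _).trans hc))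
  have h2 : (i : ℝ) + 1 ≤ i' := by exact_mod_cast h
  rw [min_eq_left (by linarith), max_eq_right zero_le_one]

theorem rampF_top (N : ℕ) {i : ℕ} (h : N ≤ i) {t : ℝ} (ht : 0 ≤ t) : rampF N i t = 1 := by
  unfold rampF
  have h2 : (N : ℝ) ≤ i := by exact_mod_cast h
  have : 0 ≤ (N : ℝ) * t := by positivity
  rw [min_eq_left (by linarith), max_eq_right zero_le_one]

theorem rampF_zero (N : ℕ) {i : ℕ} (h : i < N) : rampF N i 0 = 0 := by
  unfold rampF
  have h2 : (i : ℝ) + 1 ≤ N := by exact_mod_cast h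
  rw [max_eq_left]
  exact (min_le_right _ _).trans (by linarith)

theorem rampF_sum (N : ℕ) {t : ℝ} (ht : 0 ≤ t) (ht1 : t ≤ 1) :
    ∑ i ∈ Finset.range N, rampF N i t = N * t := by
  have key : ∀ n : ℕ, ∑ i ∈ Finset.range n, rampF N i t = max 0 (N * t - N + n) := by
    intro n
    induction n with
    | zero =>
      have : (N : ℝ) * t ≤ N := mul_le_of_le_one_right (by positivity) ht1
      simp [this]
    | succ n ih =>
      rw [Finset.sum_range_succ, ih]
      unfold rampF
      push_cast
      rcases le_total (N * t - N + n : ℝ) 0 with h | h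
      · rw [max_eq_left h, min_eq_right (by linarith)]; ring_nf
      · rw [max_eq_right h, min_eq_left (by linarith), max_eq_right zero_le_one,
          max_eq_right (by linarith)]; ring
  rw [key]; rw [max_eq_right]
  · ring
  · have : 0 ≤ (N : ℝ) * t := by positivity
    linarith

/-- the 1×1 matrix -/
def oneMat {A : Type} (a : A) : Matrix (Fin 1) (Fin 1) A := fun _ _ => a

theorem cstarNorm_fin_one {A : Type} [CStarAlgebra A] (M : Matrix (Fin 1) (Fin 1) A) :
    cstarNorm M = ‖M 0 0‖ := by
  let e : Matrix (Fin 1) (Fin 1) A ≃ₐ[ℂ] A :=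
    { toFun := fun M => M 0 0
      invFun := oneMat
      left_inv := fun M => by
        ext i j; rw [Subsingleton.elim i 0, Subsingleton.elim j 0]; rfl
      right_inv := fun a => rfl
      map_mul' := fun M N => by simp [Matrix.mul_apply]
      map_add' := fun M N => by simp
      commutes' := fun r => by simp [Matrix.algebraMap_matrix_apply] }
  have h1 : spectralRadius ℂ (star M * M) = spectralRadius ℂ (star (M 0 0) * M 0 0) := by
    have : e (star M * M) = star (M 0 0) * M 0 0 := by
      rw [map_mul]; rfl
    rw [← this]
    unfold spectralRadius
    rw [AlgEquiv.spectrum_eq]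
  unfold cstarNorm
  rw [h1, (IsSelfAdjoint.star_mul_self (M 0 0)).spectralRadius_eq_nnnorm]
  simp [CStarRing.norm_star_mul_self]

theorem cuntz_of_strictComparison {A : Type} [CStarAlgebra A] [PartialOrder A] [StarOrderedRing A]
    (hsc : StrictComparison A) {a b : A} (ha : 0 ≤ a) (hb : 0 ≤ b)
    (h : ∀ τ : A →L[ℂ] ℂ, IsTracialState τ → ∃ s t : ℝ, s < t ∧
      (∀ (n : ℕ) (r : A), 0 ≤ r → r ^ (n + 1) = a → (τ r).re ≤ s) ∧
      (∀ (n : ℕ) (r : A), 0 ≤ r → r ^ (n + 1) = b → t ≤ (τ r).re)) {η : ℝ} (hη : 0 < η) :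
    ∃ x, ‖a - x * b * star x‖ ≤ η := by
  have hpos : ∀ c : A, 0 ≤ c → ∃ y : Matrix (Fin 1) (Fin 1) A, oneMat c = star y * y := by
    intro c hc
    obtain ⟨y, rfl⟩ := CStarAlgebra.nonneg_iff_eq_star_mul_self.1 hc
    refine ⟨oneMat y, ?_⟩
    ext i j
    simp [Matrix.mul_apply, oneMat, Matrix.star_apply]
  have hroot : ∀ (c : A) (r : Matrix (Fin 1) (Fin 1) A) (n : ℕ),
      (∃ y : Matrix (Fin 1) (Fin 1) A, r = star y * y) → r ^ (n + 1) = oneMat c →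
      0 ≤ r 0 0 ∧ (r 0 0) ^ (n + 1) = c := by
    intro c r n ⟨y, hy⟩ hr
    constructor
    · rw [hy]
      simp [Matrix.mul_apply, Matrix.star_apply]
    · have hp : ∀ n : ℕ, (r ^ n) 0 0 = (r 0 0) ^ n := by
        intro n
        induction n with
        | zero => simp
        | succ n ih => rw [pow_succ, pow_succ, Matrix.mul_apply]; simp [ih]
      rw [← hp, hr]; rfl
  obtain ⟨x, hx⟩ := hsc 1 (oneMat a) (oneMat b) (hpos a ha) (hpos b hb) (by
    rintro τ hτ La Lb ⟨ra, hra, hLa⟩ ⟨rb, hrb, hLb⟩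
    obtain ⟨s, t, hst, h1, h2⟩ := h τ hτ
    have hLa' := (Complex.continuous_re.tendsto _).comp hLa
    have hLb' := (Complex.continuous_re.tendsto _).comp hLb
    have la : La ≤ s := by
      refine le_of_tendsto hLa' (Filter.Eventually.of_forall fun n => ?_)
      obtain ⟨g1, g2⟩ := hroot a (ra n) n (hra n).1 (hra n).2
      simpa using h1 n _ g1 g2
    have lb : t ≤ Lb := by
      refine ge_of_tendsto hLb' (Filter.Eventually.of_forall fun n => ?_)
      obtain ⟨g1, g2⟩ := hroot b (rb n) n (hrb n).1 (hrb n).2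
      simpa using h2 n _ g1 g2
    linarith)
  obtain ⟨n, hn⟩ := (hx.eventually (Iio_mem_nhds hη)).exists
  refine ⟨x n 0 0, ?_⟩
  simp only [cstarNorm_fin_one] at hn
  have : (oneMat a - x n * oneMat b * star (x n)) 0 0 = a - x n 0 0 * b * star (x n 0 0) := by
    simp [Matrix.mul_apply, Matrix.star_apply, oneMat]
  rw [this] at hn
  exact hn.le

theorem root_unique {A : Type} [CStarAlgebra A] [PartialOrder A] [StarOrderedRing A]
    {a r : A} (ha : IsSelfAdjoint a) {f : ℝ → ℝ} (hf : Continuous f) (n : ℕ)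
    (hr : 0 ≤ r) (h : r ^ (n + 1) = cfc f a) :
    r = cfc (fun t => f t ^ ((n + 1 : ℕ) : ℝ)⁻¹) a := by
  have hrs : IsSelfAdjoint r := IsSelfAdjoint.of_nonneg hr
  have hc : Continuous fun t : ℝ => t ^ ((n + 1 : ℕ) : ℝ)⁻¹ :=
    Real.continuous_rpow_const (by positivity)
  have h1 : r = cfc (fun t : ℝ => (t ^ (n + 1)) ^ ((n + 1 : ℕ) : ℝ)⁻¹) r := by
    conv_lhs => rw [← cfc_id ℝ r]
    refine cfc_congr fun t ht => ?_
    have : 0 ≤ t := spectrum_nonneg_of_nonneg hr ht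
    simp only [id]
    rw [Real.pow_rpow_inv_natCast this (by omega)]
  have h2 : cfc (fun t : ℝ => (t ^ (n + 1)) ^ ((n + 1 : ℕ) : ℝ)⁻¹) r
      = cfc (fun t : ℝ => t ^ ((n + 1 : ℕ) : ℝ)⁻¹) (r ^ (n + 1)) := by
    rw [cfc_comp' (fun t : ℝ => t ^ ((n + 1 : ℕ) : ℝ)⁻¹) (fun t => t ^ (n + 1)) r
      hc.continuousOn (by fun_prop), cfc_pow_id r (n + 1)]
  rw [h1, h2, h, ← cfc_comp' (fun t : ℝ => t ^ ((n + 1 : ℕ) : ℝ)⁻¹) f a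
    hc.continuousOn hf.continuousOn]

theorem trace_mono {A : Type} [CStarAlgebra A] [PartialOrder A] [StarOrderedRing A]
    {τ : A →L[ℂ] ℂ} (hτ : IsTracialState τ) {a b : A} (h : a ≤ b) : (τ a).re ≤ (τ b).re := by
  have h1 : 0 ≤ τ (b - a) :=
    hτ.2.1 _ (CStarAlgebra.nonneg_iff_eq_star_mul_self.1 (sub_nonneg.2 h))
  rw [map_sub] at h1
  have := (Complex.le_def.1 h1).1
  simpa using this

theorem approx_unitarily_equiv_of_traces_eq {A : Type} [CStarAlgebra A]
    (hsr : Dense {x : A | IsUnit x})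
    (hsc : StrictComparison A)
    (a₁ a₂ : A) (hpos₁ : ∃ y, a₁ = star y * y) (hc₁ : ‖a₁‖ ≤ 1)
    (hpos₂ : ∃ y, a₂ = star y * y) (hc₂ : ‖a₂‖ ≤ 1)
    (htr : ∀ (τ : A →L[ℂ] ℂ), IsTracialState τ →
      ∀ h : ℝ → ℝ, Continuous h → (∀ t, 0 ≤ h t) → h 0 = 0 →
        (∃ t ∈ Set.Ioc (0 : ℝ) 1, h t ≠ 0) →
        τ (cfc h a₁) = τ (cfc h a₂) ∧ 0 < τ (cfc h a₁)) :
    ∀ ε : ℝ, 0 < ε → ∃ u ∈ unitary A, ‖u * a₁ * star u - a₂‖ ≤ ε := by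
  intro ε hε
  let _ : PartialOrder A := CStarAlgebra.spectralOrder A
  have : StarOrderedRing A := CStarAlgebra.spectralOrderedRing A
  obtain ⟨N0, hN0⟩ := exists_nat_gt (48 / ε)
  obtain ⟨N, hN, hNε⟩ : ∃ N : ℕ, 0 < N ∧ 24 / (N : ℝ) + 2 * (ε / 4) ≤ ε := by
    have : 0 < (N0 : ℝ) := lt_trans (by positivity) hN0
    refine ⟨N0, by exact_mod_cast this, ?_⟩
    have : 24 / (N0 : ℝ) ≤ ε / 2 := by
      rw [div_le_iff₀ this]; rw [div_lt_iff₀ hε] at hN0; linarith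
    linarith
  let a : ZMod 2 → A := fun x => if x = 0 then a₁ else a₂
  have hcases : ∀ x : ZMod 2, x = 0 ∨ x = 1 := by decide
  have ha0 : a 0 = a₁ := rfl
  have ha1 : a 1 = a₂ := rfl
  have hane : (1 : ZMod 2) + 1 = 0 := by decide
  have pos : ∀ x, 0 ≤ a x := by
    intro x
    rcases hcases x with rfl | rfl
    · exact CStarAlgebra.nonneg_iff_eq_star_mul_self.2 hpos₁
    · exact CStarAlgebra.nonneg_iff_eq_star_mul_self.2 hpos₂
  have hn : ∀ x, ‖a x‖ ≤ 1 := by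
    intro x
    rcases hcases x with rfl | rfl
    · exact hc₁
    · exact hc₂
  have hsa : ∀ x, IsSelfAdjoint (a x) := fun x => IsSelfAdjoint.of_nonneg (pos x)
  have hsp : ∀ x, ∀ t ∈ spectrum ℝ (a x), 0 ≤ t ∧ t ≤ 1 := by
    intro x t ht
    have h1 : 0 ≤ t := spectrum_nonneg_of_nonneg (pos x) ht
    refine ⟨h1, ?_⟩
    have h2 : a x ≤ algebraMap ℝ A 1 := by
      simpa using (CStarAlgebra.norm_le_one_iff_of_nonneg (a x) (pos x)).1 (hn x)
    exact (le_algebraMap_iff_spectrum_le (hsa x)).1 h2 t ht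
  have htr' : ∀ (τ : A →L[ℂ] ℂ), IsTracialState τ →
      ∀ h : ℝ → ℝ, Continuous h → (∀ t, 0 ≤ h t) → h 0 = 0 →
        (∃ t ∈ Set.Ioc (0 : ℝ) 1, h t ≠ 0) → ∀ x,
        τ (cfc h (a x)) = τ (cfc h (a (x + 1))) ∧ 0 < τ (cfc h (a x)) := by
    intro τ hτ h g1 g2 g3 g4 x
    obtain ⟨k1, k2⟩ := htr τ hτ h g1 g2 g3 g4
    rcases hcases x with rfl | rfl
    · exact ⟨k1, k2⟩
    · rw [hane]
      exact ⟨k1.symm, k1 ▸ k2⟩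
  set X : ZMod 2 → ℕ → A := fun x i => cfc (rampF N i) (a x) with hXdef
  have hco : ∀ i s, ContinuousOn (rampF N i) s := fun i s => (rampF_cont N i).continuousOn
  have x0 : ∀ x i, 0 ≤ X x i := fun x i => cfc_nonneg fun t _ => rampF_nonneg N i t
  have x1 : ∀ x i, X x i ≤ 1 := fun x i => cfc_le_one _ _ fun t _ => rampF_le_one N i t
  have xm : ∀ x i i', i ≤ i' → X x i ≤ X x i' := fun x i i' hi =>
    cfc_mono (fun t _ => rampF_mono N hi t) (hco _ _) (hco _ _)
  have hsq : ∀ i s, ContinuousOn (fun t => Real.sqrt (rampF N i t)) s := fun i s =>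
    (Real.continuous_sqrt.comp (rampF_cont N i)).continuousOn
  have hS : ∀ x i, ∃ S : A, star S = S ∧ S * S = X x i ∧ ∀ i', i < i' → X x i' * S = S := by
    intro x i
    refine ⟨cfc (fun t => Real.sqrt (rampF N i t)) (a x), (cfc_predicate _ _ : IsSelfAdjoint _), ?_, ?_⟩
    · rw [← cfc_mul _ _ _ (hsq _ _) (hsq _ _)]
      exact cfc_congr fun t _ => Real.mul_self_sqrt (rampF_nonneg N i t)
    · intro i' hi
      rw [hXdef]
      simp only
      rw [← cfc_mul _ _ _ (hco _ _) (hsq _ _)]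
      refine cfc_congr fun t _ => ?_
      by_cases ht : rampF N i t = 0
      · rw [ht]; simp
      · rw [rampF_eq_one N hi t ht, one_mul]
  have hL : Ladder X := by
    refine ⟨fun x i => (IsSelfAdjoint.of_nonneg (x0 x i)).star_eq,
      fun x i => (CStarAlgebra.norm_le_one_iff_of_nonneg _ (x0 x i)).2 (x1 x i),
      fun x i => (CStarAlgebra.norm_le_one_iff_of_nonneg _ (sub_nonneg.2 (x1 x i))).2
        (sub_le_self _ (x0 x i)), ?_, ?_⟩
    · intro x i i' hi
      obtain ⟨S, -, h2, h3⟩ := hS x i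
      rw [← h2, ← mul_assoc, h3 i' hi]
    · intro x i η hη
      rcases lt_or_ge (i + 2) N with hi | hi
      · have : ∃ y, ‖X x i - y * X (x + 1) (i + 2) * star y‖ ≤ η := by
          refine cuntz_of_strictComparison hsc (x0 _ _) (x0 _ _) (fun τ hτ => ?_) hη
          have g1 := (htr' τ hτ (rampF N (i + 1)) (rampF_cont _ _) (rampF_nonneg _ _)
            (rampF_zero N (by omega)) ⟨1, ⟨zero_lt_one, le_rfl⟩, by
              unfold rampF
              rw [min_eq_left (by push_cast; linarith [(Nat.cast_nonneg i : (0 : ℝ) ≤ i)])]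
              simp⟩ x).1
          have g2 := (htr' τ hτ (fun t => rampF N (i + 2) t - rampF N (i + 1) t)
            ((rampF_cont _ _).sub (rampF_cont _ _))
            (fun t => sub_nonneg.2 (rampF_mono N (by omega) t))
            (by rw [rampF_zero N (by omega), rampF_zero N (by omega), sub_self])
            ⟨((N : ℝ) - 2 - i) / N, ⟨by
                have : (i : ℝ) + 2 < N := by exact_mod_cast hi
                have : 0 < (N : ℝ) - 2 - i := by linarith
                positivity, by
                have : (0 : ℝ) < N := by positivity
                rw [div_le_one this]; linarith [(Nat.cast_nonneg i : (0 : ℝ) ≤ i)]⟩, by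
              have hN' : (N : ℝ) ≠ 0 := by positivity
              unfold rampF
              rw [mul_div_cancel₀ _ hN']
              push_cast
              ring_nf
              norm_num⟩ (x + 1)).2
          rw [cfc_sub _ _ _ (hco _ _) (hco _ _), map_sub] at g2
          have g3 := (Complex.lt_def.1 g2).1
          simp only [Complex.zero_re, Complex.sub_re, sub_pos] at g3
          rw [← g1] at g3
          refine ⟨_, _, g3, ?_, ?_⟩
          · intro n r hr hrn
            apply trace_mono hτ
            rw [root_unique (hsa x) (rampF_cont N i) n hr hrn]
            refine cfc_mono (fun t _ => ?_) (((rampF_cont N i).rpow_const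
              fun _ => Or.inr (by positivity)).continuousOn) (hco _ _)
            by_cases ht : rampF N i t = 0
            · rw [ht, Real.zero_rpow (by positivity)]; exact rampF_nonneg _ _ _
            · rw [rampF_eq_one N (Nat.lt_succ_self i) t ht]
              exact Real.rpow_le_one (rampF_nonneg _ _ _) (rampF_le_one _ _ _) (by positivity)
          · intro n r hr hrn
            apply trace_mono hτ
            rw [root_unique (hsa (x + 1)) (rampF_cont N (i + 2)) n hr hrn]
            refine cfc_mono (fun t _ => ?_) (hco _ _) (((rampF_cont N (i + 2)).rpow_const
              fun _ => Or.inr (by positivity)).continuousOn)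
            have := Real.rpow_le_rpow_of_exponent_ge' (rampF_nonneg N (i + 2) t)
              (rampF_le_one N (i + 2) t) (z := ((n + 1 : ℕ) : ℝ)⁻¹) (y := 1) (by positivity)
              (inv_le_one_of_one_le₀ (by push_cast; linarith [(Nat.cast_nonneg n : (0 : ℝ) ≤ n)]))
            rwa [Real.rpow_one] at this
        obtain ⟨y, hy⟩ := this
        obtain ⟨S, h1, h2, h3⟩ := hS (x + 1) (i + 2)
        refine ⟨S * star y, ?_, ?_⟩
        · have : star (S * star y) * (S * star y) = y * X (x + 1) (i + 2) * star y := by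
            rw [star_mul, star_star, h1, ← h2]; noncomm_ring
          rw [this]; exact hy
        · rw [← mul_assoc, h3 _ (by omega)]
      · obtain ⟨S, h1, h2, h3⟩ := hS x i
        refine ⟨S, ?_, ?_⟩
        · rw [h1, h2, sub_self, norm_zero]; exact hη.le
        · have : X (x + 1) (i + 3) = 1 := by
            rw [hXdef]
            simp only
            rw [← cfc_one ℝ (a (x + 1)) (hsa _)]
            exact cfc_congr fun t ht => rampF_top N (by omega) (hsp _ t ht).1
          rw [this, one_mul]
  have hsum : ∀ x, (N : ℝ) • a x = ∑ i ∈ Finset.range N, X x i := by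
    intro x
    rw [hXdef]
    simp only
    rw [← cfc_sum _ _ _ (fun i _ => hco i _)]
    have : (N : ℝ) • a x = cfc (fun t : ℝ => (N : ℝ) * t) (a x) := by
      rw [cfc_const_mul_id (N : ℝ) (a x)]
    rw [this]
    refine cfc_congr fun t ht => ?_
    rw [Finset.sum_apply]
    exact (rampF_sum N (hsp x t ht).1 (hsp x t ht).2).symm
  obtain ⟨U, hU, hle⟩ := ladder_order hsr hL x0 x1 xm a N hN hsum (by positivity : 0 < ε / 4)
  refine ⟨star (U 1) * U 0, mul_mem (Unitary.star_mem (hU 1)) (hU 0), ?_⟩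
  have l0 := hle 0
  have l1 := hle 1
  rw [hane] at l1
  rw [zero_add] at l0
  have hmono : algebraMap ℝ A (24 / N + 2 * (ε / 4)) ≤ algebraMap ℝ A ε := algebraMap_mono A hNε
  have hfin : ‖cj (U 0) a₁ - cj (U 1) a₂‖ ≤ ε := by
    have sd : IsSelfAdjoint (cj (U 0) a₁ - cj (U 1) a₂) := by
      rw [isSelfAdjoint_iff, star_sub, cj_star, cj_star, ← ha0, ← ha1, (hsa 0).star_eq,
        (hsa 1).star_eq]
    have u1 : cj (U 0) a₁ - cj (U 1) a₂ ≤ algebraMap ℝ A ε :=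
      (sub_le_iff_le_add'.2 l0).trans hmono
    have u2 : algebraMap ℝ A (-ε) ≤ cj (U 0) a₁ - cj (U 1) a₂ := by
      have := (sub_le_iff_le_add'.2 l1).trans hmono
      rw [map_neg, neg_le, neg_sub]
      exact this
    have v1 := (le_algebraMap_iff_spectrum_le sd).1 u1
    have v2 := (algebraMap_le_iff_le_spectrum sd).1 u2
    rw [← cfc_id ℝ (cj (U 0) a₁ - cj (U 1) a₂) sd]
    exact norm_cfc_le hε.le fun t ht => abs_le.2 ⟨v2 t ht, v1 t ht⟩
  have e : star (U 1) * U 0 * a₁ * star (star (U 1) * U 0) - a₂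
      = cj (star (U 1)) (cj (U 0) a₁ - cj (U 1) a₂) := by
    have h3 : star (U 1) * U 1 = 1 := (Unitary.mem_iff.1 (hU 1)).1
    rw [cj_sub, ← cj_cj, ← cj_cj, h3]
    simp [cj]
  rw [e, cj_norm (Unitary.star_mem (hU 1))]
  exact hfin
end
end
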